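/- Let $m \ge 2$ and let $f \in \mathbb{Z}[x_1,\ldots,x_m]$ be a nonzero homogeneous polynomial of degree $d \ge 1$ whose coefficients all have absolute value at most $M$, where $M \ge 2$ is an integer. Then $f(x) > 0$ for all $x \in S_m$ if and only if there exists a nonnegative integer $k$ with $k \le C_p(M,m,d)$ such that every form in the $k$-th weighted difference substitution set $\mathrm{wds}^{(k)}(f)$ has complete monomials with all positive coefficients, where $C_p(M,m,d) = \left\lfloor \dfrac{\ln\left(2^{d^m} M^{d^m+1} m^{d^{m+1}+d} d^{(m+1)d + m d^m} (d+1)^{(m-1)(m+2)}\right)}{\ln m - \ln(m-1)} \right\rfloor + 2.$ -/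

import Mathlib

/-!
If all coefficients of the substituted forms are positive, so is `f` on the simplex: sorting the
coordinates of a point of the simplex exhibits it as the image of a point of the simplex under a WDS
matrix (`exists_WDSmat_mulVec_eq`), and a form with positive coefficients is positive on the
simplex.

For the converse two estimates are combined.

* *The minimum of `f` is not too small* (`one_le_pow_mul_aeval`). Let `μ` be the minimum of `f` on
  the simplex. Minimizers of the perturbation `f + ε ∑ xᵢ^(d+1)/(d+1)` satisfy, by Lagrange, the
  equations `xᵢᵈ = u (τ - ∂ᵢf)` on their support, `xᵢ = 0` off it, and `∑ xᵢ = 1`, with `u = 1/ε`;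
  Euler's identity shows `τ → d μ` as `ε → 0`. These equations allow every monomial to be rewritten
  over `ℤ[τ][u]` in terms of the `dᵐ` monomials with exponents `< d`, so the determinant of
  multiplication by `∑ xᵢ - 1` on these is a polynomial in `ℤ[τ][u]` that vanishes at `(u, τ)`
  (`exists_stationary_eliminant`). It is nonzero since it is so at `u = 0`, and weighting monomials
  by degree bounds its `ℓ¹` norm. Letting `u → ∞`, its leading coefficient in `u` vanishes at
  `τ = d μ`; a positive root of a nonzero integer polynomial is at least the reciprocal of its `ℓ¹`
  norm (`one_le_intL1_mul_of_root`).

* *WDS products contract* (`abs_WDSprod_sub_le`). A WDS matrix is column stochastic and has a row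
  all of whose entries are at least `1/m`, so the entries of each row of a product of `k` of them
  differ by at most `(1 - 1/m)^k`. Hence the coefficients of `f(Bx)` are close to those of
  `f(b) (∑ xⱼ)^d`, where `b` is a column of the product `B`; they are positive once `f(b)` exceeds
  the error (`coeff_aeval_linearForms_pos`).

The exponent `k = ⌊log Z / (log m - log (m - 1))⌋ + 1`, with `Z` the argument of the logarithm in
`C_p(M, m, d)`, makes `(1 - 1/m)^k < 1/Z`, which is precise enough.
-/

open Matrix

/-- The upper-triangular matrix `T_m` whose `(i,j)` entry (with `1`-based indices)
is `1/j` when `i ≤ j` and `0` otherwise. -/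
noncomputable def Tmat (m : ℕ) : Matrix (Fin m) (Fin m) ℝ :=
  fun i j => if i ≤ j then 1 / ((j : ℕ) + 1) else 0

/-- The permutation matrix of `θ`: its `(i,j)` entry is `1` if `j = θ i` and `0` otherwise. -/
def permMat {m : ℕ} (θ : Equiv.Perm (Fin m)) : Matrix (Fin m) (Fin m) ℝ :=
  fun i j => if θ i = j then 1 else 0

/-- The weighted difference substitution (WDS) matrix `A_θ = P_θ T_m`. -/
noncomputable def WDSmat {m : ℕ} (θ : Equiv.Perm (Fin m)) : Matrix (Fin m) (Fin m) ℝ :=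
  permMat θ * Tmat m

/-- Substitution of the linear change of variables `x = B y` into a multivariate
polynomial: each variable `xᵢ` is replaced by `∑ⱼ B i j * yⱼ`. -/
noncomputable def linSubst {m : ℕ} (B : Matrix (Fin m) (Fin m) ℝ)
    (f : MvPolynomial (Fin m) ℝ) : MvPolynomial (Fin m) ℝ :=
  MvPolynomial.bind₁ (fun i => ∑ j, MvPolynomial.C (B i j) * MvPolynomial.X j) f

/-- The product `A_{θ k} ⋯ A_{θ 1}` of the WDS matrices of a sequence of permutations. -/
noncomputable def WDSprod {m k : ℕ} (θ : Fin k → Equiv.Perm (Fin m)) :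
    Matrix (Fin m) (Fin m) ℝ :=
  (List.ofFn fun i => WDSmat (θ i)).prod

open Filter Topology NNReal

/-! ### `ℓ¹` norms of polynomials -/

section L1Seminorm

open Polynomial

variable {A M : Type*} [CommRing A]

/-- The additive part of `l1Seminorm`: the weighted sum of the sizes of the coefficients. -/
noncomputable def l1AddSeminorm (w : M → ℝ≥0) (ν : RingSeminorm A) :
    AddGroupSeminorm (AddMonoidAlgebra A M) where
  toFun p := p.coeff.sum fun x a => ν a * w x
  map_zero' := Finsupp.sum_zero_index
  add_le' p q := by
    classical
    have sum_eq (r : AddMonoidAlgebra A M)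
        (hr : r.coeff.support ⊆ p.coeff.support ∪ q.coeff.support) :
        (r.coeff.sum fun x a => ν a * w x) =
          ∑ x ∈ p.coeff.support ∪ q.coeff.support, ν (r.coeff x) * w x :=
      Finsupp.sum_of_support_subset _ hr _ fun _ _ => by rw [map_zero, zero_mul]
    rw [sum_eq (p + q) Finsupp.support_add, sum_eq p Finset.subset_union_left,
      sum_eq q Finset.subset_union_right, ← Finset.sum_add_distrib]
    refine Finset.sum_le_sum fun x _ => ?_
    rw [← add_mul]
    gcongr
    exact map_add_le_add ν _ _
  neg' p := by
    rw [AddMonoidAlgebra.coeff_neg, Finsupp.sum_neg_index fun _ => by rw [map_zero, zero_mul]]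
    simp only [map_neg_eq_map]

lemma l1AddSeminorm_single (w : M → ℝ≥0) (ν : RingSeminorm A) (x : M) (a : A) :
    l1AddSeminorm w ν (.single x a) = ν a * w x :=
  Finsupp.sum_single_index (h := fun y b => ν b * w y) (by rw [map_zero, zero_mul])

variable [AddCommMonoid M]

lemma l1AddSeminorm_mul_le (w : Multiplicative M →* ℝ≥0) (ν : RingSeminorm A)
    (p q : AddMonoidAlgebra A M) :
    l1AddSeminorm (w ∘ .ofAdd) ν (p * q) ≤
      l1AddSeminorm (w ∘ .ofAdd) ν p * l1AddSeminorm (w ∘ .ofAdd) ν q := by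
  set N := l1AddSeminorm (w ∘ .ofAdd) ν with N_def
  have sum_le {ι : Type _} (s : Finset ι) (F : ι → AddMonoidAlgebra A M) :
      N (∑ i ∈ s, F i) ≤ ∑ i ∈ s, N (F i) :=
    Finset.le_sum_of_subadditive _ (map_zero N).le (map_add_le_add N) s F
  have single_le (x y : M) :
      N (.single (x + y) (p.coeff x * q.coeff y)) ≤
        (ν (p.coeff x) * w (.ofAdd x)) * (ν (q.coeff y) * w (.ofAdd y)) := by
    rw [N_def, l1AddSeminorm_single, Function.comp_apply, ofAdd_add, map_mul w, NNReal.coe_mul,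
      mul_mul_mul_comm]
    gcongr
    exact map_mul_le_mul ν _ _
  calc N (p * q)
      = N (∑ x ∈ p.coeff.support, ∑ y ∈ q.coeff.support,
          .single (x + y) (p.coeff x * q.coeff y)) := by
        rw [AddMonoidAlgebra.mul_def]; rfl
    _ ≤ ∑ x ∈ p.coeff.support, ∑ y ∈ q.coeff.support,
          (ν (p.coeff x) * w (.ofAdd x)) * (ν (q.coeff y) * w (.ofAdd y)) :=
        (sum_le _ _).trans <| Finset.sum_le_sum fun x _ =>
          (sum_le _ _).trans <| Finset.sum_le_sum fun y _ => single_le x y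
    _ = N p * N q := (Finset.sum_mul_sum _ _ _ _).symm

/-- The weighted `ℓ¹` seminorm `∑ ν(aₓ) w(x)` on a monoid algebra, in particular on polynomials in
any set of variables; the weight `w` is multiplicative so that the seminorm is submultiplicative. -/
noncomputable def l1Seminorm (w : Multiplicative M →* ℝ≥0) (ν : RingSeminorm A) :
    RingSeminorm (AddMonoidAlgebra A M) where
  __ := l1AddSeminorm (w ∘ .ofAdd) ν
  mul_le' := l1AddSeminorm_mul_le w ν

lemma l1Seminorm_eq_sum (w : Multiplicative M →* ℝ≥0) (ν : RingSeminorm A)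
    (p : AddMonoidAlgebra A M) :
    l1Seminorm w ν p = ∑ x ∈ p.coeff.support, ν (p.coeff x) * w (.ofAdd x) :=
  rfl

lemma l1Seminorm_single (w : Multiplicative M →* ℝ≥0) (ν : RingSeminorm A) (x : M) (a : A) :
    l1Seminorm w ν (.single x a) = ν a * w (.ofAdd x) :=
  l1AddSeminorm_single _ ν x a

/-- The `ℓ¹` seminorm on univariate polynomials, which form a structure wrapping a monoid
algebra. -/
noncomputable def polyL1Seminorm (ν : RingSeminorm A) : RingSeminorm A[X] where
  toFun p := l1Seminorm (M := ℕ) 1 ν p.toFinsupp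
  map_zero' := map_zero (l1Seminorm (M := ℕ) 1 ν)
  add_le' p q := map_add_le_add (l1Seminorm (M := ℕ) 1 ν) p.toFinsupp q.toFinsupp
  neg' p := by rw [toFinsupp_neg, map_neg_eq_map]
  mul_le' p q := by rw [toFinsupp_mul]; exact map_mul_le_mul _ _ _

lemma polyL1Seminorm_eq_sum (ν : RingSeminorm A) (p : A[X]) :
    polyL1Seminorm ν p = ∑ n ∈ p.support, ν (p.coeff n) := by
  refine (l1Seminorm_eq_sum (M := ℕ) 1 ν p.toFinsupp).trans ?_
  simp only [support_toFinsupp, toFinsupp_apply, MonoidHom.one_apply, NNReal.coe_one, mul_one]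

lemma polyL1Seminorm_monomial (ν : RingSeminorm A) (n : ℕ) (a : A) :
    polyL1Seminorm ν (monomial n a) = ν a := by
  refine (congrArg _ (toFinsupp_monomial n a)).trans ((l1Seminorm_single (M := ℕ) 1 ν n a).trans ?_)
  rw [MonoidHom.one_apply, NNReal.coe_one, mul_one]

lemma polyL1Seminorm_C (ν : RingSeminorm A) (a : A) : polyL1Seminorm ν (C a) = ν a :=
  polyL1Seminorm_monomial ν 0 a

lemma polyL1Seminorm_X (ν : RingSeminorm A) : polyL1Seminorm ν X = ν 1 :=
  polyL1Seminorm_monomial ν 1 1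

lemma le_polyL1Seminorm (ν : RingSeminorm A) (p : A[X]) (n : ℕ) :
    ν (p.coeff n) ≤ polyL1Seminorm ν p := by
  rw [polyL1Seminorm_eq_sum]
  by_cases hn : n ∈ p.support
  · exact Finset.single_le_sum (f := fun k => ν (p.coeff k)) (fun _ _ => apply_nonneg ν _) hn
  · rw [notMem_support_iff.1 hn, map_zero]
    exact Finset.sum_nonneg fun _ _ => apply_nonneg ν _

end L1Seminorm

/-! ### Roots of integer polynomials -/

section LeadingCoeff

open Polynomial

/-- The `ℓ¹` norm on `ℤ[τ]`. -/
noncomputable abbrev intL1 : RingSeminorm ℤ[X] := polyL1Seminorm (normRingSeminorm ℤ)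

/-- Compare the trailing term with all the others. -/
lemma one_le_intL1_mul_of_root {q : ℤ[X]} (hq : q ≠ 0) {t : ℝ} (ht : 0 < t)
    (hroot : aeval t q = 0) : 1 ≤ intL1 q * t := by
  have norm_eq : intL1 q = ∑ n ∈ q.support, |(q.coeff n : ℝ)| := polyL1Seminorm_eq_sum _ q
  set b := q.natTrailingDegree
  have hb : b ∈ q.support := natTrailingDegree_mem_support_of_nonzero hq
  have one_le_coeff : (1 : ℝ) ≤ |(q.coeff b : ℝ)| := by
    exact_mod_cast Int.one_le_abs (mem_support_iff.1 hb)
  have one_le_norm : 1 ≤ intL1 q := one_le_coeff.trans (le_polyL1Seminorm (normRingSeminorm ℤ) q b)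
  rcases le_total 1 t with h1 | h1
  · exact one_le_mul_of_one_le_of_one_le one_le_norm h1
  have trailing_eq :
      (q.coeff b : ℝ) * t ^ b = -∑ n ∈ q.support.erase b, (q.coeff n : ℝ) * t ^ n := by
    rw [eq_neg_iff_add_eq_zero, Finset.add_sum_erase _ (fun n => (q.coeff n : ℝ) * t ^ n) hb,
      ← hroot, aeval_def, eval₂_eq_sum, Polynomial.sum_def]
    rfl
  have term_le (n : ℕ) (hn : n ∈ q.support.erase b) :
      |(q.coeff n : ℝ) * t ^ n| ≤ |(q.coeff n : ℝ)| * t ^ (b + 1) := by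
    have hbn : b < n := lt_of_le_of_ne (natTrailingDegree_le_of_mem_supp n
      (Finset.mem_of_mem_erase hn)) (Finset.ne_of_mem_erase hn).symm
    rw [abs_mul, abs_of_pos (pow_pos ht n)]
    gcongr ?_ * ?_
    exact pow_le_pow_of_le_one ht.le h1 hbn
  refine le_of_mul_le_mul_right ?_ (pow_pos ht b)
  calc 1 * t ^ b ≤ |(q.coeff b : ℝ) * t ^ b| := by
        rw [abs_mul, abs_of_pos (pow_pos ht b)]; gcongr
    _ ≤ ∑ n ∈ q.support.erase b, |(q.coeff n : ℝ) * t ^ n| := by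
        rw [trailing_eq, abs_neg]; exact Finset.abs_sum_le_sum_abs _ _
    _ ≤ ∑ n ∈ q.support.erase b, |(q.coeff n : ℝ)| * t ^ (b + 1) := Finset.sum_le_sum term_le
    _ ≤ ∑ n ∈ q.support, |(q.coeff n : ℝ)| * t ^ (b + 1) :=
        Finset.sum_le_sum_of_subset_of_nonneg (Finset.erase_subset _ _)
          fun _ _ _ => by positivity
    _ = intL1 q * t * t ^ b := by rw [norm_eq, ← Finset.sum_mul]; ring

lemma aevalAeval_eq_eval₂ {R A : Type*} [CommRing R] [CommRing A] [Algebra R A] (x y : A)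
    (P : R[X][X]) : aevalAeval x y P = eval₂ (aeval x : R[X] →ₐ[R] A).toRingHom y P := by
  have hom_eq : (aevalAeval x y : R[X][X] →ₐ[R] A).toRingHom =
      eval₂RingHom (aeval x : R[X] →ₐ[R] A).toRingHom y := by
    ext <;> simp
  exact DFunLike.congr_fun hom_eq P

variable {R : Type*} [CommRing R] [Algebra R ℝ]

lemma continuous_aevalAeval (P : R[X][X]) :
    Continuous fun x : ℝ × ℝ => aevalAeval x.1 x.2 P := by
  simp only [aevalAeval_eq_eval₂, eval₂_eq_sum_range]
  refine continuous_finsetSum _ fun k _ => Continuous.mul ?_ (continuous_snd.pow k)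
  exact (P.coeff k).continuous_aeval.comp continuous_fst

/-- In terms of `1 / u` the equation holds for the reversed polynomial. -/
lemma aeval_leadingCoeff_eq_zero_of_frequently {ι : Type*} {l : Filter ι} {u τ : ι → ℝ} {t : ℝ}
    (hu : Tendsto u l atTop) (hτ : Tendsto τ l (𝓝 t)) {P : R[X][X]}
    (hP : ∃ᶠ n in l, aevalAeval (τ n) (u n) P = 0) : aeval t P.leadingCoeff = 0 := by
  have reverse_root : ∃ᶠ n in l, aevalAeval (τ n) (u n)⁻¹ P.reverse = 0 := by
    refine (hP.and_eventually (hu.eventually_gt_atTop 0)).mono fun n ⟨hroot, hpos⟩ => ?_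
    let := invertibleOfNonzero hpos.ne'
    rw [aevalAeval_eq_eval₂] at hroot ⊢
    exact (eval₂_reverse_eq_zero_iff _ (u n) P).2 hroot
  have limit := ((continuous_aevalAeval P.reverse).tendsto (t, 0)).comp
    (hτ.prodMk_nhds (tendsto_inv_atTop_zero.comp hu))
  have limit_root := isClosed_singleton.mem_of_frequently_of_tendsto reverse_root limit
  rwa [Set.mem_singleton_iff, aevalAeval_eq_eval₂, eval₂_at_zero, coeff_zero_reverse] at limit_root

end LeadingCoeff

/-! ### Elimination -/

section Determinant

variable {A ι : Type*} [CommRing A]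

lemma map_prod_le_prod (ν : RingSeminorm A) (hν : ν 1 ≤ 1) (s : Finset ι) (F : ι → A) :
    ν (∏ i ∈ s, F i) ≤ ∏ i ∈ s, ν (F i) := by
  classical
  induction s using Finset.induction_on with
  | empty => simpa only [Finset.prod_empty] using hν
  | insert a s ha ih =>
    rw [Finset.prod_insert ha, Finset.prod_insert ha]
    exact (map_mul_le_mul ν _ _).trans (mul_le_mul_of_nonneg_left ih (apply_nonneg _ _))

variable [Fintype ι] [DecidableEq ι]

lemma map_det_le_sum_perm (ν : RingSeminorm A) (hν : ν 1 ≤ 1) (Q : Matrix ι ι A) :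
    ν Q.det ≤ ∑ π : Equiv.Perm ι, ∏ i, ν (Q i (π i)) := by
  rw [← det_transpose, det_apply]
  refine (Finset.le_sum_of_subadditive ν (map_zero ν).le (map_add_le_add ν) _ _).trans
    (Finset.sum_le_sum fun π _ => ?_)
  rcases Int.units_eq_one_or (Equiv.Perm.sign π) with h | h
  · rw [h, one_smul]
    exact map_prod_le_prod ν hν _ _
  · rw [h, Units.neg_smul, one_smul, map_neg_eq_map]
    exact map_prod_le_prod ν hν _ _

lemma sum_perm_prod_le_prod_sum {F : ι → ι → ℝ} (hF : ∀ i j, 0 ≤ F i j) :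
    ∑ π : Equiv.Perm ι, ∏ i, F i (π i) ≤ ∏ i, ∑ j, F i j := by
  rw [Fintype.prod_sum]
  refine (Finset.sum_map Finset.univ ⟨fun π : Equiv.Perm ι => (π : ι → ι), DFunLike.coe_injective⟩
    fun φ => ∏ i, F i (φ i)).symm.trans_le ?_
  exact Finset.sum_le_sum_of_subset_of_nonneg (Finset.subset_univ _)
    fun φ _ _ => Finset.prod_nonneg fun i _ => hF i (φ i)

/-- Conjugating by `diag W` does not change the determinant. -/
lemma map_det_le_of_weighted_row_sum_le (ν : RingSeminorm A) (hν : ν 1 ≤ 1) {Q : Matrix ι ι A}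
    {W : ι → ℝ} (hW : ∀ i, 0 < W i) {K : ℝ} (hK : ∀ i, ∑ j, ν (Q i j) * W j ≤ K * W i) :
    ν Q.det ≤ K ^ Fintype.card ι := by
  have term_nonneg (i j : ι) : 0 ≤ ν (Q i j) * W j := mul_nonneg (apply_nonneg _ _) (hW j).le
  refine le_of_mul_le_mul_right ?_ (Finset.prod_pos fun i (_ : i ∈ Finset.univ) => hW i)
  calc ν Q.det * ∏ i, W i
      ≤ (∑ π : Equiv.Perm ι, ∏ i, ν (Q i (π i))) * ∏ i, W i :=
        mul_le_mul_of_nonneg_right (map_det_le_sum_perm ν hν Q)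
          (Finset.prod_nonneg fun i _ => (hW i).le)
    _ = ∑ π : Equiv.Perm ι, ∏ i, (ν (Q i (π i)) * W (π i)) := by
        rw [Finset.sum_mul]
        refine Finset.sum_congr rfl fun π _ => ?_
        rw [Finset.prod_mul_distrib, Equiv.prod_comp π W]
    _ ≤ ∏ i, ∑ j, ν (Q i j) * W j := sum_perm_prod_le_prod_sum term_nonneg
    _ ≤ ∏ i, K * W i :=
        Finset.prod_le_prod (fun i _ => Finset.sum_nonneg fun j _ => term_nonneg i j)
          fun i _ => hK i
    _ = K ^ Fintype.card ι * ∏ i, W i := by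
        rw [Finset.prod_mul_distrib, Finset.prod_const, Finset.card_univ]

end Determinant

section Reduction

open MvPolynomial

variable {R σ : Type*} [CommRing R]

/-- The weight `α ↦ r ^ |α|` on exponents. -/
noncomputable def degreeWeight (σ : Type*) (r : ℝ≥0) : Multiplicative (σ →₀ ℕ) →* ℝ≥0 :=
  (powersHom ℝ≥0 r).comp (AddMonoidHom.toMultiplicative Finsupp.degree)

/-- The `ℓ¹` seminorm on polynomials with each monomial of degree `k` weighted by `r ^ k`. -/
noncomputable abbrev degL1 (r : ℝ≥0) (ν : RingSeminorm R) : RingSeminorm (MvPolynomial σ R) :=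
  l1Seminorm (degreeWeight σ r) ν

lemma degL1_eq_sum (r : ℝ≥0) (ν : RingSeminorm R) (p : MvPolynomial σ R) :
    degL1 r ν p = ∑ α ∈ p.support, ν (p.coeff α) * (r : ℝ) ^ α.degree :=
  l1Seminorm_eq_sum _ ν p

lemma degL1_monomial (r : ℝ≥0) (ν : RingSeminorm R) (α : σ →₀ ℕ) (a : R) :
    degL1 r ν (monomial α a) = ν a * (r : ℝ) ^ α.degree :=
  l1Seminorm_single _ ν α a

/-- The exponents of the monomials that are reduced with respect to the leading terms `xᵢᵈ`. -/
def box (σ : Type*) (d : ℕ) : Set (σ →₀ ℕ) := {α | ∀ i, α i < d}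

/-- The ideal of the system `xᵢᵈ = hᵢ(x)`. -/
noncomputable def relIdeal (d : ℕ) (h : σ → MvPolynomial σ R) : Ideal (MvPolynomial σ R) :=
  Ideal.span (Set.range fun i => X i ^ d - h i)

variable {d : ℕ} {h : σ → MvPolynomial σ R} {r : ℝ≥0} {ν : RingSeminorm R}

lemma exists_reduced_of_monomials {p : MvPolynomial σ R}
    (hp : ∀ α ∈ p.support, ∃ q ∈ restrictSupport R (box σ d),
      monomial α (p.coeff α) - q ∈ relIdeal d h ∧
        degL1 r ν q ≤ degL1 r ν (monomial α (p.coeff α))) :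
    ∃ q ∈ restrictSupport R (box σ d), p - q ∈ relIdeal d h ∧ degL1 r ν q ≤ degL1 r ν p := by
  choose! q q_mem sub_mem norm_le using hp
  refine ⟨∑ α ∈ p.support, q α, Submodule.sum_mem _ q_mem, ?_, ?_⟩
  · nth_rewrite 1 [p.as_sum]
    rw [← Finset.sum_sub_distrib]
    exact Ideal.sum_mem _ sub_mem
  · calc degL1 r ν (∑ α ∈ p.support, q α) ≤ ∑ α ∈ p.support, degL1 r ν (q α) :=
          Finset.le_sum_of_subadditive _ (map_zero _).le (map_add_le_add _) _ _
      _ ≤ ∑ α ∈ p.support, degL1 r ν (monomial α (p.coeff α)) := Finset.sum_le_sum norm_le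
      _ = degL1 r ν p := by simp only [degL1_monomial, degL1_eq_sum r ν p]

/-- Replacing one factor `xᵢᵈ` of a non-reduced monomial by `hᵢ` lowers the degree and does not
increase the norm. -/
lemma exists_reduced_sub_mem_relIdeal (hdeg : ∀ i, (h i).totalDegree < d)
    (hnorm : ∀ i, degL1 r ν (h i) ≤ (r : ℝ) ^ d) (p : MvPolynomial σ R) :
    ∃ q ∈ restrictSupport R (box σ d), p - q ∈ relIdeal d h ∧ degL1 r ν q ≤ degL1 r ν p := by
  induction hn : p.totalDegree using Nat.strong_induction_on generalizing p with
  | _ n ih =>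
  refine exists_reduced_of_monomials fun α hα => ?_
  by_cases hbox : α ∈ box σ d
  · exact ⟨_, (monomial_mem_restrictSupport ..).2 (.inl hbox), by simp, le_rfl⟩
  obtain ⟨i, hi⟩ : ∃ i, d ≤ α i := by
    simpa only [box, Set.mem_ofPred_eq, not_forall, not_lt] using hbox
  obtain ⟨β, rfl⟩ : ∃ β, α = β + Finsupp.single i d :=
    ⟨α - Finsupp.single i d, (tsub_add_cancel_of_le (Finsupp.single_le_iff.2 hi)).symm⟩
  set a := p.coeff (β + Finsupp.single i d)
  have monomial_eq : monomial (β + Finsupp.single i d) a = monomial β a * X i ^ d := by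
    rw [X_pow_eq_monomial, monomial_mul, mul_one]
  have degree_lt : (monomial β a * h i).totalDegree < n := by
    calc (monomial β a * h i).totalDegree ≤ (monomial β a).totalDegree + (h i).totalDegree :=
          totalDegree_mul _ _
      _ < β.degree + d := add_lt_add_of_le_of_lt (totalDegree_monomial_le β a) (hdeg i)
      _ = (β + Finsupp.single i d).degree := by rw [map_add, Finsupp.degree_single]
      _ ≤ n := hn ▸ le_totalDegree hα
  obtain ⟨q, q_mem, sub_mem, norm_le⟩ := ih _ degree_lt _ rfl
  refine ⟨q, q_mem, ?_, norm_le.trans ?_⟩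
  · have := Ideal.mul_mem_left (relIdeal d h) (monomial β a) (Ideal.subset_span ⟨i, rfl⟩)
    rw [monomial_eq]
    convert add_mem this sub_mem using 1
    ring
  · calc degL1 r ν (monomial β a * h i) ≤ degL1 r ν (monomial β a) * degL1 r ν (h i) :=
          map_mul_le_mul _ _ _
      _ ≤ ν a * (r : ℝ) ^ β.degree * (r : ℝ) ^ d := by
          rw [degL1_monomial]
          exact mul_le_mul_of_nonneg_left (hnorm i) (mul_nonneg (apply_nonneg _ _) (by positivity))
      _ = degL1 r ν (monomial (β + Finsupp.single i d) a) := by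
          rw [degL1_monomial, map_add, Finsupp.degree_single, pow_add, mul_assoc]

/-- Under a specialisation that kills every `hᵢ` the relations become `xᵢᵈ = 0`. -/
lemma map_coeff_eq_of_sub_mem_relIdeal {K : Type*} [CommRing K] {φ : R →+* K}
    (hφ : ∀ i, (h i).map φ = 0) {p q : MvPolynomial σ R} (hpq : p - q ∈ relIdeal d h)
    {γ : σ →₀ ℕ} (hγ : γ ∈ box σ d) : φ (q.coeff γ) = φ (p.coeff γ) := by
  have mem_span : (p - q).map φ ∈
      Ideal.span ((fun α => monomial α (1 : K)) '' Set.range fun i => Finsupp.single i d) := by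
    refine Ideal.span_mono ?_ (Ideal.map_span (MvPolynomial.map φ) _ ▸
      Ideal.mem_map_of_mem (MvPolynomial.map φ) hpq)
    rintro _ ⟨_, ⟨i, rfl⟩, rfl⟩
    exact ⟨_, ⟨i, rfl⟩, by simp [hφ, X_pow_eq_monomial]⟩
  have coeff_eq_zero : ((p - q).map φ).coeff γ = 0 := by
    by_contra hne
    obtain ⟨_, ⟨i, rfl⟩, hle⟩ :=
      mem_ideal_span_monomial_image.1 mem_span γ (mem_support_iff.2 hne)
    exact (hγ i).not_ge (Finsupp.single_le_iff.1 hle)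
  rw [coeff_map, coeff_sub, map_sub, sub_eq_zero] at coeff_eq_zero
  exact coeff_eq_zero.symm

variable [Fintype σ]

/-- The exponents in `box σ d`, listed by functions `σ → Fin d` so as to index matrices. -/
noncomputable def boxExp : (σ → Fin d) ↪ (σ →₀ ℕ) where
  toFun γ := Finsupp.equivFunOnFinite.symm fun i => γ i
  inj' _ _ h := funext fun i => Fin.val_injective (DFunLike.congr_fun h i)

lemma boxExp_mem_box (γ : σ → Fin d) : boxExp γ ∈ box σ d :=
  fun i => (γ i).isLt

lemma boxExp_le_boxExp {β γ : σ → Fin d} : boxExp β ≤ boxExp γ ↔ β ≤ γ :=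
  Iff.rfl

variable [DecidableEq σ]

lemma sum_boxExp_eq_sum_support {S : Type*} [AddCommMonoid S]
    {q : MvPolynomial σ R} (hq : q ∈ restrictSupport R (box σ d)) (F : (σ →₀ ℕ) → S)
    (hF : ∀ α, q.coeff α = 0 → F α = 0) :
    ∑ γ : σ → Fin d, F (boxExp γ) = ∑ α ∈ q.support, F α := by
  rw [← Finset.sum_map]
  refine (Finset.sum_subset (fun α hα => ?_) fun α _ hα => hF α (notMem_support_iff.1 hα)).symm
  have hbox : α ∈ box σ d := (mem_restrictSupport_iff _).1 hq hα
  exact Finset.mem_map.2 ⟨fun i => ⟨α i, hbox i⟩, Finset.mem_univ _, Finsupp.ext fun i => rfl⟩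

/-- `Q` represents multiplication by `p` modulo `relIdeal d h` on the span of the reduced
monomials. -/
def IsMulMatrix (h : σ → MvPolynomial σ R) (p : MvPolynomial σ R)
    (Q : Matrix (σ → Fin d) (σ → Fin d) R) : Prop :=
  ∀ β, monomial (boxExp β) 1 * p - ∑ γ, monomial (boxExp γ) (Q β γ) ∈ relIdeal d h

lemma exists_isMulMatrix (hdeg : ∀ i, (h i).totalDegree < d)
    (hnorm : ∀ i, degL1 r ν (h i) ≤ (r : ℝ) ^ d) (hν : ν 1 ≤ 1) (p : MvPolynomial σ R) :
    ∃ Q : Matrix (σ → Fin d) (σ → Fin d) R, IsMulMatrix h p Q ∧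
      ∀ β, ∑ γ, ν (Q β γ) * (r : ℝ) ^ (boxExp γ).degree ≤
        degL1 r ν p * (r : ℝ) ^ (boxExp β).degree := by
  choose q q_mem sub_mem norm_le using exists_reduced_sub_mem_relIdeal (r := r) (ν := ν) hdeg hnorm
  refine ⟨fun β γ => (q (monomial (boxExp β) 1 * p)).coeff (boxExp γ), fun β => ?_, fun β => ?_⟩
  · rw [sum_boxExp_eq_sum_support (q_mem _)
      (fun α => monomial α ((q (monomial (boxExp β) 1 * p)).coeff α)) fun α hα => by
        rw [hα, map_zero], ← as_sum]
    exact sub_mem _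
  · calc ∑ γ, ν ((q (monomial (boxExp β) 1 * p)).coeff (boxExp γ)) * (r : ℝ) ^ (boxExp γ).degree
        = degL1 r ν (q (monomial (boxExp β) 1 * p)) := by
          rw [degL1_eq_sum]
          exact sum_boxExp_eq_sum_support (q_mem _)
            (fun α => ν ((q (monomial (boxExp β) 1 * p)).coeff α) * (r : ℝ) ^ α.degree)
            fun α hα => by rw [hα, map_zero, zero_mul]
      _ ≤ degL1 r ν (monomial (boxExp β) 1 * p) := norm_le _
      _ ≤ (r : ℝ) ^ (boxExp β).degree * degL1 r ν p := by
          refine (map_mul_le_mul _ _ _).trans (mul_le_mul_of_nonneg_right ?_ (apply_nonneg _ _))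
          rw [degL1_monomial]
          exact mul_le_of_le_one_left (by positivity) hν
      _ = degL1 r ν p * (r : ℝ) ^ (boxExp β).degree := mul_comm _ _

/-- Cramer's rule: the vector of reduced monomials contains the entry `1` and is annihilated by `Q`
modulo the ideal. -/
lemma IsMulMatrix.C_det_mem {p : MvPolynomial σ R}
    {Q : Matrix (σ → Fin d) (σ → Fin d) R} (hQ : IsMulMatrix h p Q) (hd : 0 < d) :
    C Q.det ∈ relIdeal d h ⊔ Ideal.span {p} := by
  set J := relIdeal d h ⊔ Ideal.span {p}
  let v : (σ → Fin d) → MvPolynomial σ R := fun γ => monomial (boxExp γ) 1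
  let CQ : Matrix (σ → Fin d) (σ → Fin d) (MvPolynomial σ R) := Q.map C
  have mulVec_mem (β : σ → Fin d) : (CQ *ᵥ v) β ∈ J := by
    have mulVec_eq : (CQ *ᵥ v) β = ∑ γ, monomial (boxExp γ) (Q β γ) :=
      Finset.sum_congr rfl fun γ _ => by
        simp only [CQ, v, Matrix.map_apply, C_mul_monomial, mul_one]
    rw [mulVec_eq, ← sub_sub_cancel (v β * p) (∑ γ, _)]
    exact sub_mem (Ideal.mem_sup_right (Ideal.mul_mem_left _ _ (Ideal.mem_span_singleton_self p)))
      (Ideal.mem_sup_left (hQ β))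
  have det_smul_mem (β : σ → Fin d) : CQ.det * v β ∈ J := by
    have cramer : CQ.det • v = CQ.adjugate *ᵥ (CQ *ᵥ v) := by
      rw [mulVec_mulVec, adjugate_mul, smul_mulVec, one_mulVec]
    rw [← smul_eq_mul, ← Pi.smul_apply, cramer]
    exact Ideal.sum_mem _ fun γ _ => Ideal.mul_mem_left _ _ (mulVec_mem γ)
  have v_zero : v (fun _ => ⟨0, hd⟩) = 1 := by
    have : boxExp (fun _ : σ => (⟨0, hd⟩ : Fin d)) = 0 := Finsupp.ext fun _ => rfl
    simp only [v, this, monomial_zero', map_one]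
  have det_eq : CQ.det = C Q.det := (RingHom.map_det C Q).symm
  simpa only [v_zero, mul_one, det_eq] using det_smul_mem fun _ => ⟨0, hd⟩

lemma det_ne_zero_of_triangular {ι K : Type*} [Fintype ι] [DecidableEq ι] [PartialOrder ι]
    [CommRing K] [IsDomain K] {Q : Matrix ι ι K} (hdiag : ∀ i, Q i i ≠ 0)
    (htri : ∀ i j, Q i j ≠ 0 → i ≤ j) : Q.det ≠ 0 := by
  intro hdet
  obtain ⟨v, hv, hQv⟩ := exists_mulVec_eq_zero_iff.2 hdet
  obtain ⟨i, hi⟩ := (Set.toFinite {i | v i ≠ 0}).exists_maximal (Function.ne_iff.1 hv)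
  have row_eq : (Q *ᵥ v) i = Q i i * v i := by
    refine Finset.sum_eq_single i (fun j _ hji => ?_) fun h => (h (Finset.mem_univ i)).elim
    by_contra hne
    exact hji (hi.eq_of_ge (right_ne_zero_of_mul hne) (htri i j (left_ne_zero_of_mul hne)))
  exact mul_ne_zero (hdiag i) hi.prop (row_eq ▸ congrFun hQv i)

/-- Modulo the relations `xᵢᵈ = 0` multiplication by `p` is triangular for divisibility of
monomials, with the constant coefficient of `p` on the diagonal. -/
lemma IsMulMatrix.det_ne_zero {K : Type*} [CommRing K] [IsDomain K] {φ : R →+* K}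
    (hφ : ∀ i, (h i).map φ = 0) {p : MvPolynomial σ R} (hp : φ (p.coeff 0) ≠ 0)
    {Q : Matrix (σ → Fin d) (σ → Fin d) R} (hQ : IsMulMatrix h p Q) : Q.det ≠ 0 := by
  classical
  have coeff_eq (β γ : σ → Fin d) :
      φ (Q β γ) = if β ≤ γ then φ (p.coeff (boxExp γ - boxExp β)) else 0 := by
    have sum_coeff : (∑ γ, monomial (boxExp γ) (Q β γ)).coeff (boxExp γ) = Q β γ := by
      simp only [coeff_sum, coeff_monomial, boxExp.injective.eq_iff, Finset.sum_ite_eq',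
        Finset.mem_univ, if_true]
    rw [← sum_coeff, map_coeff_eq_of_sub_mem_relIdeal hφ (hQ β) (boxExp_mem_box γ),
      coeff_monomial_mul', apply_ite φ, one_mul, map_zero]
    simp only [boxExp_le_boxExp]
  have map_det_ne_zero : (Q.map φ).det ≠ 0 := by
    refine det_ne_zero_of_triangular (fun β => ?_) fun β γ hβγ => ?_
    · rwa [Matrix.map_apply, coeff_eq, if_pos le_rfl, tsub_self]
    · by_contra hnot
      exact hβγ (by rw [Matrix.map_apply, coeff_eq, if_neg hnot])
  exact fun hdet => map_det_ne_zero ((RingHom.map_det φ Q).symm.trans (by rw [hdet, map_zero]))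

omit [DecidableEq σ] in
/-- A common solution of `xᵢᵈ = hᵢ(x)` and `p(x) = 0` is a root of `D`. -/
lemma exists_eliminant {K : Type*} [CommRing K] [IsDomain K] {φ : R →+* K}
    (hd : 0 < d) (hdeg : ∀ i, (h i).totalDegree < d)
    (hnorm : ∀ i, degL1 r ν (h i) ≤ (r : ℝ) ^ d) (hr : 0 < r) (hν : ν 1 ≤ 1)
    (hφ : ∀ i, (h i).map φ = 0) {p : MvPolynomial σ R} (hp : φ (p.coeff 0) ≠ 0) :
    ∃ D : R, D ≠ 0 ∧ ν D ≤ degL1 r ν p ^ d ^ Fintype.card σ ∧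
      C D ∈ relIdeal d h ⊔ Ideal.span {p} := by
  classical
  obtain ⟨Q, hQ, row_sum_le⟩ := exists_isMulMatrix hdeg hnorm hν p
  refine ⟨Q.det, hQ.det_ne_zero hφ hp, ?_, hQ.C_det_mem hd⟩
  have := map_det_le_of_weighted_row_sum_le ν hν (fun _ => by positivity) row_sum_le
  rwa [Fintype.card_fun, Fintype.card_fin] at this

end Reduction

section Eliminant

open MvPolynomial

variable {σ : Type*}

/-- The `ℓ¹` norm on integer polynomials in several variables. -/
noncomputable abbrev mvIntL1 : RingSeminorm (MvPolynomial σ ℤ) :=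
  degL1 1 (normRingSeminorm ℤ)

lemma mvIntL1_eq_sum (p : MvPolynomial σ ℤ) :
    mvIntL1 p = ∑ α ∈ p.support, |((p.coeff α : ℤ) : ℝ)| := by
  simp only [degL1_eq_sum, NNReal.coe_one, one_pow, mul_one]
  rfl

lemma degL1_map_le {R : Type*} [CommRing R] {ν : RingSeminorm R} (hν : ∀ n : ℤ, ν n ≤ |(n : ℝ)|)
    {r : ℝ≥0} (hr : 1 ≤ r) {p : MvPolynomial σ ℤ} {k : ℕ} (hp : p.totalDegree ≤ k) :
    degL1 r ν (p.map (Int.castRingHom R)) ≤ mvIntL1 p * (r : ℝ) ^ k := by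
  calc degL1 r ν (p.map (Int.castRingHom R))
      ≤ ∑ α ∈ p.support, ν (p.coeff α : ℤ) * (r : ℝ) ^ α.degree := by
        simp only [degL1_eq_sum, coeff_map, eq_intCast]
        exact Finset.sum_le_sum_of_subset_of_nonneg (support_map_subset _ p)
          fun α _ _ => mul_nonneg (apply_nonneg _ _) (by positivity)
    _ ≤ ∑ α ∈ p.support, |((p.coeff α : ℤ) : ℝ)| * (r : ℝ) ^ k := by
        refine Finset.sum_le_sum fun α hα => mul_le_mul (hν _) ?_ (by positivity) (abs_nonneg _)
        exact pow_le_pow_right₀ hr ((le_totalDegree hα).trans hp)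
    _ = mvIntL1 p * (r : ℝ) ^ k := by rw [mvIntL1_eq_sum, Finset.sum_mul]

/-- The right-hand side of the equation `xᵈ = u (s τ - g(x))`; the coefficient ring `ℤ[τ][u]` has
`τ = C X` and `u = X`. -/
noncomputable def stationaryRHS (s : ℤ) (g : MvPolynomial σ ℤ) :
    MvPolynomial σ (Polynomial (Polynomial ℤ)) :=
  C .X * (C (.C (s * .X)) - g.map (Int.castRingHom _))

lemma totalDegree_stationaryRHS_lt (s : ℤ) {g : MvPolynomial σ ℤ} {d : ℕ}
    (hg : g.totalDegree < d) : (stationaryRHS s g).totalDegree < d := by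
  refine (totalDegree_mul _ _).trans_lt ?_
  rw [totalDegree_C, zero_add]
  refine (totalDegree_sub _ _).trans_lt (max_lt ?_ ?_)
  · rw [totalDegree_C]
    exact pos_of_gt hg
  · exact (Finset.sup_mono (support_map_subset _ g)).trans_lt hg

lemma map_constantCoeff_stationaryRHS (s : ℤ) (g : MvPolynomial σ ℤ) :
    (stationaryRHS s g).map Polynomial.constantCoeff = 0 := by
  simp [stationaryRHS]

lemma polyL1Seminorm_intL1_intCast (n : ℤ) :
    polyL1Seminorm intL1 (n : Polynomial (Polynomial ℤ)) = |(n : ℝ)| := by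
  have cast_eq : (n : Polynomial (Polynomial ℤ)) = .C (.C n) := by simp
  rw [cast_eq, polyL1Seminorm_C, polyL1Seminorm_C]
  rfl

lemma degL1_stationaryRHS_le {s : ℤ} (hs : |s| ≤ 1) {g : MvPolynomial σ ℤ} {d : ℕ}
    (hg : g.totalDegree < d) {A : ℝ≥0} (hA : mvIntL1 g ≤ A) :
    degL1 (A + 1) (polyL1Seminorm intL1) (stationaryRHS s g) ≤ ((A + 1 : ℝ≥0) : ℝ) ^ d := by
  obtain ⟨k, rfl⟩ : ∃ k, d = k + 1 := ⟨d - 1, by omega⟩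
  have degL1_C (a : Polynomial (Polynomial ℤ)) :
      degL1 (σ := σ) (A + 1) (polyL1Seminorm intL1) (C a) = polyL1Seminorm intL1 a := by
    rw [← monomial_zero', degL1_monomial, map_zero, pow_zero, mul_one]
  have one_le : 1 ≤ ((A + 1 : ℝ≥0) : ℝ) ^ k := one_le_pow₀ (by simp)
  have norm_s : polyL1Seminorm intL1 (.C (s * .X)) ≤ 1 := by
    rw [polyL1Seminorm_C, ← Polynomial.C_eq_intCast, ← Polynomial.monomial_one_one_eq_X,
      Polynomial.C_mul_monomial, polyL1Seminorm_monomial]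
    change |((s * 1 : ℤ) : ℝ)| ≤ 1
    exact_mod_cast (mul_one s).symm ▸ hs
  calc degL1 (A + 1) (polyL1Seminorm intL1) (stationaryRHS s g)
      ≤ 1 * (1 + A * ((A + 1 : ℝ≥0) : ℝ) ^ k) := by
        refine (map_mul_le_mul _ _ _).trans (mul_le_mul ?_ ?_ (apply_nonneg _ _) zero_le_one)
        · rw [degL1_C, polyL1Seminorm_X]
          exact ((polyL1Seminorm_C _ 1).trans (norm_one (α := ℤ))).le
        · refine (map_sub_le_add _ _ _).trans (add_le_add ((degL1_C _).trans_le norm_s) ?_)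
          refine (degL1_map_le (fun n => (polyL1Seminorm_intL1_intCast n).le)
            le_add_self (Nat.le_of_lt_succ hg)).trans ?_
          exact mul_le_mul_of_nonneg_right hA (by positivity)
    _ ≤ ((A + 1 : ℝ≥0) : ℝ) ^ k + A * ((A + 1 : ℝ≥0) : ℝ) ^ k := by
        rw [one_mul]
        gcongr
    _ = ((A + 1 : ℝ≥0) : ℝ) ^ (k + 1) := by
        push_cast
        ring

lemma degL1_sum_X_sub_one_le {R : Type*} [CommRing R] [Fintype σ] {ν : RingSeminorm R}
    (hν : ν 1 ≤ 1) (r : ℝ≥0) :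
    degL1 r ν (∑ i : σ, X i - 1) ≤ Fintype.card σ * r + 1 := by
  refine (map_sub_le_add _ _ _).trans (add_le_add ?_ ?_)
  · refine (Finset.le_sum_of_subadditive _ (map_zero _).le (map_add_le_add _) _ _).trans ?_
    refine (Finset.sum_le_card_nsmul _ _ (r : ℝ) fun i _ => ?_).trans_eq (nsmul_eq_mul _ _)
    rw [X, degL1_monomial, Finsupp.degree_single, pow_one]
    exact mul_le_of_le_one_left r.2 hν
  · rwa [← C_1, ← monomial_zero', degL1_monomial, map_zero, pow_zero, mul_one]

lemma exists_stationary_eliminant [Fintype σ] {d : ℕ} {s : σ → ℤ}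
    (hs : ∀ i, |s i| ≤ 1) {g : σ → MvPolynomial σ ℤ} (hd : 0 < d)
    (hg : ∀ i, (g i).totalDegree < d) {A : ℝ≥0} (hA : ∀ i, mvIntL1 (g i) ≤ A) :
    ∃ D : Polynomial (Polynomial ℤ), D ≠ 0 ∧
      polyL1Seminorm intL1 D ≤ (Fintype.card σ * (A + 1) + 1) ^ d ^ Fintype.card σ ∧
      ∀ (x : σ → ℝ) (t u : ℝ), (∀ i, x i ^ d = u * (s i * t - aeval x (g i))) → ∑ i, x i = 1 →
        Polynomial.aevalAeval t u D = 0 := by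
  have hν : polyL1Seminorm intL1 1 ≤ 1 := by
    simpa only [Int.cast_one, abs_one] using (polyL1Seminorm_intL1_intCast 1).le
  have coeff_zero_ne : Polynomial.constantCoeff
      ((∑ i : σ, X i - 1 : MvPolynomial σ (Polynomial (Polynomial ℤ))).coeff 0) ≠ 0 := by
    simp [coeff_sum]
  obtain ⟨D, D_ne_zero, D_le, D_mem⟩ := exists_eliminant (r := A + 1) (ν := polyL1Seminorm intL1) hd
    (fun i => totalDegree_stationaryRHS_lt (s i) (hg i))
    (fun i => degL1_stationaryRHS_le (hs i) (hg i) (hA i)) (by positivity) hν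
    (fun i => map_constantCoeff_stationaryRHS (s i) (g i)) coeff_zero_ne
  refine ⟨D, D_ne_zero, D_le.trans ?_, fun x t u hx hsum => ?_⟩
  · exact pow_le_pow_left₀ (apply_nonneg _ _) (degL1_sum_X_sub_one_le hν _) _
  let ev : MvPolynomial σ (Polynomial (Polynomial ℤ)) →+* ℝ :=
    eval₂Hom (Polynomial.aevalAeval t u : Polynomial (Polynomial ℤ) →ₐ[ℤ] ℝ).toRingHom x
  have ev_C (a : Polynomial (Polynomial ℤ)) : ev (C a) = Polynomial.aevalAeval t u a :=
    eval₂_C _ _ a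
  have ev_X (i : σ) : ev (X i) = x i := eval₂_X _ _ i
  have ev_map (p : MvPolynomial σ ℤ) : ev (p.map (Int.castRingHom _)) = aeval x p := by
    rw [coe_eval₂Hom, eval₂_map, aeval_def]
    congr 1
    exact RingHom.ext_int _ _
  have ideal_le_ker : relIdeal d (fun i => stationaryRHS (s i) (g i)) ⊔
      Ideal.span {∑ i : σ, X i - 1} ≤ RingHom.ker ev := by
    refine sup_le (Ideal.span_le.2 ?_) (Ideal.span_le.2 ?_)
    · rintro _ ⟨i, rfl⟩
      simp only [stationaryRHS, SetLike.mem_coe, RingHom.mem_ker, map_sub, map_mul, map_pow, ev_X,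
        ev_C, ev_map, Polynomial.aevalAeval_Y, Polynomial.aevalAeval_C, Polynomial.aeval_X,
        map_intCast, hx i, sub_self]
    · rintro _ rfl
      simp only [SetLike.mem_coe, RingHom.mem_ker, map_sub, map_sum, map_one, ev_X, hsum]
      exact sub_self 1
  simpa only [ev_C] using RingHom.mem_ker.1 (ideal_le_ker D_mem)

end Eliminant

/-! ### Minimum of a positive form on the simplex -/

section Minimum

open MvPolynomial

variable {σ : Type*}

lemma eval_map_intCast (x : σ → ℝ) (p : MvPolynomial σ ℤ) :
    eval x (p.map (Int.castRingHom ℝ)) = aeval x p := by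
  rw [eval_map, aeval_def, algebraMap_int_eq]

variable [Fintype σ]

lemma hasDerivAt_eval_curve (p : MvPolynomial σ ℝ) {γ : ℝ → σ → ℝ} {v : σ → ℝ} {t₀ : ℝ}
    (hγ : ∀ i, HasDerivAt (fun t => γ t i) (v i) t₀) :
    HasDerivAt (fun t => eval (γ t) p) (∑ i, v i * eval (γ t₀) (pderiv i p)) t₀ := by
  classical
  induction p using MvPolynomial.induction_on with
  | C a => simpa using hasDerivAt_const t₀ a
  | add p q hp hq => simpa [mul_add, Finset.sum_add_distrib] using hp.fun_add hq
  | mul_X p j hp =>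
    simp only [map_mul, eval_X]
    refine (hp.fun_mul (hγ j)).congr_deriv ?_
    have sum_single : ∑ i, v i * (eval (γ t₀) p * (Pi.single i 1 : σ → ℝ) j) =
        eval (γ t₀) p * v j := by
      simp [Pi.single_apply, mul_comm]
    simp only [Derivation.leibniz, smul_eq_mul, map_add, map_mul, eval_X, pderiv_X, mul_add,
      Finset.sum_add_distrib, Finset.sum_mul]
    rw [add_comm, ← sum_single]
    congr 1 <;> refine Finset.sum_congr rfl fun i _ => ?_
    · by_cases hij : i = j <;> simp [hij]
    · ring

/-- Move from the minimizer towards the vertex `i`; since `xᵢ > 0` one may also move away from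
it. -/
lemma eval_pderiv_eq_of_isMinOn {F : MvPolynomial σ ℝ} {x : σ → ℝ} (hx : x ∈ stdSimplex ℝ σ)
    (hmin : IsMinOn (fun y => eval y F) (stdSimplex ℝ σ) x) {i : σ} (hi : x i ≠ 0) :
    eval x (pderiv i F) = ∑ j, x j * eval x (pderiv j F) := by
  classical
  have xi_pos : 0 < x i := (hx.1 i).lt_of_ne' hi
  have xi_le_one : x i ≤ 1 := (mem_Icc_of_mem_stdSimplex hx i).2
  let γ : ℝ → σ → ℝ := fun t j => x j + t * ((Pi.single i 1 : σ → ℝ) j - x j)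
  have γ_zero : γ 0 = x := by simp [γ]
  have γ_mem {t : ℝ} (ht : |t| < x i) : γ t ∈ stdSimplex ℝ σ := by
    obtain ⟨t_gt, t_lt⟩ := abs_lt.1 ht
    refine ⟨fun j => ?_, ?_⟩
    · have xj_nonneg := hx.1 j
      rcases eq_or_ne j i with rfl | hji
      · simp only [γ, Pi.single_eq_same]
        nlinarith
      · simp only [γ, Pi.single_eq_of_ne hji]
        nlinarith
    · simp only [γ, Finset.sum_add_distrib, ← Finset.mul_sum, Finset.sum_sub_distrib,
        Finset.sum_pi_single', Finset.mem_univ, if_true, hx.2, sub_self, mul_zero, add_zero]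
  have local_min : IsLocalMin (fun t => eval (γ t) F) 0 := by
    filter_upwards [(continuous_abs.tendsto' (0 : ℝ) 0 abs_zero).eventually_lt_const xi_pos]
      with t ht
    rw [γ_zero]
    exact hmin (γ_mem ht)
  have deriv_eq_zero := local_min.hasDerivAt_eq_zero <| hasDerivAt_eval_curve F fun j =>
    (((hasDerivAt_id (0 : ℝ)).mul_const ((Pi.single i 1 : σ → ℝ) j - x j)).const_add (x j))
  change ∑ j, 1 * _ * eval (γ 0) _ = 0 at deriv_eq_zero
  simpa [γ_zero, sub_mul, Finset.sum_sub_distrib, Pi.single_apply, sub_eq_zero] using deriv_eq_zero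

/-- The perturbation of a form of degree `d` whose partial derivatives are `∂ᵢf + ε xᵢᵈ`. -/
noncomputable def perturb (f : MvPolynomial σ ℝ) (d : ℕ) (ε : ℝ) : MvPolynomial σ ℝ :=
  f + C (ε / (d + 1)) * ∑ i, X i ^ (d + 1)

/-- The Lagrange multiplier `∑ xⱼ ∂ⱼ(perturb f d ε)`, simplified by Euler's identity. -/
noncomputable def multiplier (f : MvPolynomial σ ℝ) (d : ℕ) (ε : ℝ) (x : σ → ℝ) : ℝ :=
  d * eval x f + ε * ∑ i, x i ^ (d + 1)

variable {f : MvPolynomial σ ℝ} {d : ℕ}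

lemma eval_perturb (f : MvPolynomial σ ℝ) (d : ℕ) (ε : ℝ) (x : σ → ℝ) :
    eval x (perturb f d ε) = eval x f + ε / (d + 1) * ∑ i, x i ^ (d + 1) := by
  simp [perturb]

lemma eval_pderiv_perturb (f : MvPolynomial σ ℝ) (d : ℕ) (ε : ℝ) (x : σ → ℝ) (i : σ) :
    eval x (pderiv i (perturb f d ε)) = eval x (pderiv i f) + ε * x i ^ d := by
  classical
  have : (d : ℝ) + 1 ≠ 0 := by positivity
  simp only [perturb, map_add, pderiv_C_mul, map_sum, pderiv_pow, pderiv_X, map_mul, eval_C,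
    Pi.single_apply, Nat.cast_add_one, map_natCast, map_one, add_tsub_cancel_right, map_pow,
    eval_X, mul_ite, mul_one, mul_zero, Finset.sum_ite_eq',
    Finset.mem_univ, ↓reduceIte, add_right_inj]
  field_simp

/-- The equation of `stationaryRHS` with `u = 1 / ε` and `s = 1`. -/
lemma pow_eq_of_isMinOn_perturb (hf : f.IsHomogeneous d) {ε : ℝ} (hε : 0 < ε) {x : σ → ℝ}
    (hx : x ∈ stdSimplex ℝ σ) (hmin : IsMinOn (fun y => eval y (perturb f d ε)) (stdSimplex ℝ σ) x)
    {i : σ} (hi : x i ≠ 0) :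
    x i ^ d = ε⁻¹ * (multiplier f d ε x - eval x (pderiv i f)) := by
  have euler : ∑ j, x j * eval x (pderiv j f) = d * eval x f := by
    simpa using congrArg (eval x) hf.sum_X_mul_pderiv
  have stationary := eval_pderiv_eq_of_isMinOn hx hmin hi
  simp only [eval_pderiv_perturb, mul_add, Finset.sum_add_distrib, euler] at stationary
  have multiplier_eq : multiplier f d ε x = eval x (pderiv i f) + ε * x i ^ d := by
    rw [stationary, multiplier, Finset.mul_sum]
    exact congrArg _ (Finset.sum_congr rfl fun j _ => by ring)
  rw [multiplier_eq]
  field_simp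
  ring

lemma sum_pow_succ_mem_Icc {x : σ → ℝ} (hx : x ∈ stdSimplex ℝ σ) (d : ℕ) :
    ∑ i, x i ^ (d + 1) ∈ Set.Icc (0 : ℝ) 1 :=
  ⟨Finset.sum_nonneg fun i _ => pow_nonneg (hx.1 i) _, hx.2 ▸ Finset.sum_le_sum fun i _ =>
    pow_le_of_le_one (hx.1 i) (mem_Icc_of_mem_stdSimplex hx i).2 d.succ_ne_zero⟩

lemma tendsto_multiplier {x₀ : σ → ℝ} (hx₀ : x₀ ∈ stdSimplex ℝ σ)
    (hmin₀ : IsMinOn (fun y => eval y f) (stdSimplex ℝ σ) x₀) {x : ℝ → σ → ℝ}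
    (hx : ∀ ε, x ε ∈ stdSimplex ℝ σ)
    (hmin : ∀ ε, IsMinOn (fun y => eval y (perturb f d ε)) (stdSimplex ℝ σ) (x ε)) :
    Tendsto (fun ε => multiplier f d ε (x ε)) (𝓝[>] 0) (𝓝 (d * eval x₀ f)) := by
  have tendsto_zero : Tendsto (fun ε : ℝ => ε) (𝓝[>] 0) (𝓝 0) := tendsto_id.mono_left inf_le_left
  have eval_le {ε : ℝ} (hε : 0 < ε) : eval (x ε) f ≤ eval x₀ f + ε := by
    have perturb_le : eval (x ε) (perturb f d ε) ≤ eval x₀ (perturb f d ε) := hmin ε hx₀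
    rw [eval_perturb, eval_perturb] at perturb_le
    have coeff_nonneg : 0 ≤ ε / (d + 1) := by positivity
    have coeff_le : ε / (d + 1) ≤ ε := div_le_self hε.le (by simp)
    have at_x := mul_nonneg coeff_nonneg (sum_pow_succ_mem_Icc (hx ε) d).1
    have at_x₀ := mul_le_of_le_one_right coeff_nonneg (sum_pow_succ_mem_Icc hx₀ d).2
    linarith
  have eval_tendsto : Tendsto (fun ε => eval (x ε) f) (𝓝[>] 0) (𝓝 (eval x₀ f)) := by
    refine tendsto_of_tendsto_of_tendsto_of_le_of_le' tendsto_const_nhds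
      (by simpa only [add_zero] using tendsto_zero.const_add (eval x₀ f))
      (.of_forall fun ε => hmin₀ (hx ε)) ?_
    filter_upwards [self_mem_nhdsWithin] with ε hε using eval_le hε
  have sum_tendsto : Tendsto (fun ε => ε * ∑ i, x ε i ^ (d + 1)) (𝓝[>] 0) (𝓝 0) := by
    refine squeeze_zero' ?_ ?_ tendsto_zero <;> filter_upwards [self_mem_nhdsWithin] with ε hε
    · exact mul_nonneg (le_of_lt hε) (sum_pow_succ_mem_Icc (hx ε) d).1
    · exact mul_le_of_le_one_right (le_of_lt hε) (sum_pow_succ_mem_Icc (hx ε) d).2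
  simpa only [multiplier, add_zero] using (eval_tendsto.const_mul (d : ℝ)).add sum_tendsto

lemma exists_frequently_eq {α β : Type*} [Finite β] {l : Filter α} [l.NeBot] (F : α → β) :
    ∃ b, ∃ᶠ a in l, F a = b := by
  by_contra! never
  obtain ⟨a, ha⟩ := (eventually_all.2 never).exists
  exact ha _ rfl

lemma exists_support_eliminant {f : MvPolynomial σ ℤ} (hd : 0 < d) (hf : f.IsHomogeneous d)
    {A : ℝ≥0} (hA : ∀ i, mvIntL1 (pderiv i f) ≤ A) (I : Set σ) :
    ∃ D : Polynomial (Polynomial ℤ), D ≠ 0 ∧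
      polyL1Seminorm intL1 D ≤ (Fintype.card σ * (A + 1) + 1) ^ d ^ Fintype.card σ ∧
      ∀ (x : σ → ℝ) (t u : ℝ), (∀ i ∈ I, x i ^ d = u * (t - aeval x (pderiv i f))) →
        (∀ i ∉ I, x i = 0) → ∑ i, x i = 1 → Polynomial.aevalAeval t u D = 0 := by
  classical
  obtain ⟨D, D_ne_zero, D_le, D_root⟩ :=
    exists_stationary_eliminant (s := fun i => if i ∈ I then 1 else 0)
      (g := fun i => if i ∈ I then pderiv i f else 0) (A := A) (fun i => by split_ifs <;> simp) hd
      (fun i => by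
        split_ifs
        · exact hf.pderiv.totalDegree_le.trans_lt (Nat.sub_lt hd one_pos)
        · simpa using hd)
      (fun i => by
        split_ifs
        · exact hA i
        · simp)
  refine ⟨D, D_ne_zero, D_le, fun x t u eq_on zero_off hsum => D_root x t u (fun i => ?_) hsum⟩
  by_cases hi : i ∈ I
  · simpa [hi] using eq_on i hi
  · simp [hi, zero_off i hi, hd.ne']

/-- The minimizers of `perturb f d ε` with a support that recurs for arbitrarily small `ε` are roots
of one eliminant, and `d` times the minimum of `f` is then a root of its leading coefficient in
`u = 1 / ε`. -/
lemma one_le_pow_mul_of_isMinOn {f : MvPolynomial σ ℤ} (hd : 0 < d) (hf : f.IsHomogeneous d)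
    {A : ℝ≥0} (hA : ∀ i, mvIntL1 (pderiv i f) ≤ A) {x₀ : σ → ℝ} (hx₀ : x₀ ∈ stdSimplex ℝ σ)
    (hmin₀ : IsMinOn (fun y => aeval y f) (stdSimplex ℝ σ) x₀) (hpos : 0 < aeval x₀ f) :
    1 ≤ (Fintype.card σ * (A + 1 : ℝ) + 1) ^ d ^ Fintype.card σ * (d * aeval x₀ f) := by
  set fR := f.map (Int.castRingHom ℝ) with fR_def
  have exists_min (ε : ℝ) : ∃ x ∈ stdSimplex ℝ σ,
      IsMinOn (fun y => eval y (perturb fR d ε)) (stdSimplex ℝ σ) x :=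
    (isCompact_stdSimplex ℝ σ).exists_isMinOn ⟨x₀, hx₀⟩ (continuous_eval _).continuousOn
  choose x hx hmin using exists_min
  obtain ⟨I, hI⟩ := exists_frequently_eq (l := 𝓝[>] 0) fun ε => {i | x ε i ≠ 0}
  obtain ⟨D, D_ne_zero, D_le, D_root⟩ := exists_support_eliminant hd hf hA I
  have root : ∃ᶠ ε in 𝓝[>] 0, Polynomial.aevalAeval (multiplier fR d ε (x ε)) ε⁻¹ D = 0 := by
    refine (hI.and_eventually self_mem_nhdsWithin).mono fun ε ⟨support_eq, hε⟩ => ?_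
    subst support_eq
    refine D_root (x ε) _ _ (fun i hi => ?_) (fun i hi => not_not.1 hi) (hx ε).2
    rw [← eval_map_intCast, ← pderiv_map]
    exact pow_eq_of_isMinOn_perturb (hf.map _) hε (hx ε) (hmin ε) hi
  have leading_root := aeval_leadingCoeff_eq_zero_of_frequently tendsto_inv_nhdsGT_zero
    (tendsto_multiplier hx₀ (by simpa only [fR_def, eval_map_intCast] using hmin₀) hx hmin) root
  rw [eval_map_intCast] at leading_root
  have root_pos : 0 < d * aeval x₀ f := mul_pos (Nat.cast_pos.2 hd) hpos
  refine (one_le_intL1_mul_of_root (Polynomial.leadingCoeff_ne_zero.2 D_ne_zero) root_pos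
    leading_root).trans (mul_le_mul_of_nonneg_right ?_ root_pos.le)
  exact (le_polyL1Seminorm intL1 D D.natDegree).trans D_le

lemma card_support_le_pow {R : Type*} [CommSemiring R] {p : MvPolynomial σ R}
    (hp : p.totalDegree < d) : p.support.card ≤ d ^ Fintype.card σ := by
  classical
  refine (Finset.card_le_card_of_injOn (t := Fintype.piFinset fun _ : σ => Finset.range d)
    (fun α : σ →₀ ℕ => (α : σ → ℕ)) (fun α hα => ?_) DFunLike.coe_injective.injOn).trans_eq
    (by simp)
  simp only [Finset.mem_coe, Fintype.mem_piFinset, Finset.mem_range]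
  exact fun i => (Finsupp.le_degree i α).trans_lt ((le_totalDegree hα).trans_lt hp)

lemma mvIntL1_le {p : MvPolynomial σ ℤ} (hp : p.totalDegree < d) {M : ℝ≥0}
    (hM : ∀ α ∈ p.support, |((p.coeff α : ℤ) : ℝ)| ≤ M) :
    mvIntL1 p ≤ (d ^ Fintype.card σ * M : ℝ≥0) := by
  rw [mvIntL1_eq_sum]
  refine (Finset.sum_le_card_nsmul _ _ _ hM).trans ?_
  rw [nsmul_eq_mul]
  push_cast
  gcongr
  exact_mod_cast card_support_le_pow hp

lemma mvIntL1_pderiv_le {f : MvPolynomial σ ℤ} (hd : 0 < d) (hf : f.IsHomogeneous d) {M : ℝ≥0}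
    (hM : ∀ α, |((f.coeff α : ℤ) : ℝ)| ≤ M) (i : σ) :
    mvIntL1 (pderiv i f) ≤ (d ^ Fintype.card σ * (M * d) : ℝ≥0) := by
  have degree_lt : (pderiv i f).totalDegree < d :=
    hf.pderiv.totalDegree_le.trans_lt (Nat.sub_lt hd one_pos)
  refine mvIntL1_le degree_lt fun α hα => ?_
  have αi_lt : α i + 1 ≤ d :=
    (Finsupp.le_degree i α).trans_lt ((le_totalDegree hα).trans_lt degree_lt)
  rw [coeff_pderiv, Int.cast_mul, abs_mul, NNReal.coe_mul, NNReal.coe_natCast]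
  refine mul_le_mul (hM _) ?_ (abs_nonneg _) M.coe_nonneg
  rw [abs_of_nonneg (by positivity)]
  exact_mod_cast αi_lt

lemma one_le_pow_mul_aeval {f : MvPolynomial σ ℤ} (hd : 0 < d) (hf : f.IsHomogeneous d)
    {M : ℝ≥0} (hM : ∀ α, |((f.coeff α : ℤ) : ℝ)| ≤ M)
    (hpos : ∀ x ∈ stdSimplex ℝ σ, 0 < aeval x f) {x : σ → ℝ} (hx : x ∈ stdSimplex ℝ σ) :
    1 ≤ (Fintype.card σ * (d ^ Fintype.card σ * (M * d) + 1 : ℝ) + 1) ^ d ^ Fintype.card σ *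
      (d * aeval x f) := by
  obtain ⟨x₀, hx₀, hmin⟩ := (isCompact_stdSimplex ℝ σ).exists_isMinOn ⟨x, hx⟩
    (continuous_eval (f.map (Int.castRingHom ℝ))).continuousOn
  simp only [eval_map_intCast] at hmin
  have at_min := one_le_pow_mul_of_isMinOn hd hf (mvIntL1_pderiv_le hd hf hM) hx₀ hmin (hpos x₀ hx₀)
  push_cast at at_min
  refine at_min.trans ?_
  gcongr
  exact hmin hx

end Minimum

/-! ### Contraction by column-stochastic matrices -/

section Contraction

variable {n : Type*} [Fintype n] [DecidableEq n] {A : Matrix n n ℝ} {c : ℝ}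

lemma le_vecMul_of_mem_colStochastic (hA : A ∈ colStochastic ℝ n) {i j : n} (hc : c ≤ A i j)
    {v : n → ℝ} {lo : ℝ} (hv : ∀ l, lo ≤ v l) : c * v i + (1 - c) * lo ≤ (v ᵥ* A) j := by
  have sum_eq : ∑ l, (v l - lo) * A l j = (v ᵥ* A) j - lo := by
    simp only [sub_mul, Finset.sum_sub_distrib, ← Finset.mul_sum, sum_col_of_mem_colStochastic hA,
      mul_one, vecMul, dotProduct]
  have term_le : (v i - lo) * A i j ≤ ∑ l, (v l - lo) * A l j :=
    Finset.single_le_sum (f := fun l => (v l - lo) * A l j)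
      (fun l _ => mul_nonneg (sub_nonneg.2 (hv l)) (hA.1 l j)) (Finset.mem_univ i)
  have := mul_le_mul_of_nonneg_left hc (sub_nonneg.2 (hv i))
  linarith

/-- Doeblin's argument: the columns of `A` share the mass `c` at the index `i`. -/
lemma exists_vecMul_mem_Icc (hA : A ∈ colStochastic ℝ n) {i : n} (hc : ∀ j, c ≤ A i j)
    {v : n → ℝ} {lo δ : ℝ} (hv : ∀ l, v l ∈ Set.Icc lo (lo + δ)) :
    ∃ lo', ∀ j, (v ᵥ* A) j ∈ Set.Icc lo' (lo' + (1 - c) * δ) := by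
  refine ⟨c * v i + (1 - c) * lo, fun j =>
    ⟨le_vecMul_of_mem_colStochastic hA (hc j) fun l => (hv l).1, ?_⟩⟩
  have neg_le := le_vecMul_of_mem_colStochastic hA (hc j) (v := -v) (lo := -(lo + δ))
    fun l => neg_le_neg (hv l).2
  rw [neg_vecMul, Pi.neg_apply, Pi.neg_apply] at neg_le
  linarith

lemma exists_vecMul_list_prod_mem_Icc {L : List (Matrix n n ℝ)}
    (hL : ∀ A ∈ L, A ∈ colStochastic ℝ n ∧ ∃ i, ∀ j, c ≤ A i j) {v : n → ℝ} {lo δ : ℝ}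
    (hv : ∀ l, v l ∈ Set.Icc lo (lo + δ)) :
    ∃ lo', ∀ j, (v ᵥ* L.prod) j ∈ Set.Icc lo' (lo' + (1 - c) ^ L.length * δ) := by
  induction L generalizing v lo δ with
  | nil => exact ⟨lo, by simpa using hv⟩
  | cons A L ih =>
    obtain ⟨hAL, hL⟩ := List.forall_mem_cons.1 hL
    obtain ⟨hA, i, hi⟩ := hAL
    obtain ⟨lo₁, h₁⟩ := exists_vecMul_mem_Icc hA hi hv
    obtain ⟨lo₂, h₂⟩ := ih hL h₁
    refine ⟨lo₂, fun j => ?_⟩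
    rw [List.prod_cons, ← vecMul_vecMul, List.length_cons, pow_succ, mul_assoc]
    exact h₂ j

lemma abs_list_prod_sub_le {L : List (Matrix n n ℝ)}
    (hL : ∀ A ∈ L, A ∈ colStochastic ℝ n ∧ ∃ i, ∀ j, c ≤ A i j) (i j j' : n) :
    |L.prod i j - L.prod i j'| ≤ (1 - c) ^ L.length := by
  have unit_mem (l : n) : (Pi.single i 1 : n → ℝ) l ∈ Set.Icc (0 : ℝ) (0 + 1) := by
    rw [Pi.single_apply]
    split_ifs <;> simp
  obtain ⟨lo, hlo⟩ := exists_vecMul_list_prod_mem_Icc hL unit_mem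
  simp only [single_one_vecMul, row_apply, mul_one] at hlo
  simpa [add_sub_cancel_left] using abs_sub_le_of_le_of_le (hlo j).1 (hlo j).2 (hlo j').1 (hlo j').2

end Contraction

/-! ### Weighted difference substitutions -/

section WDS

variable {m : ℕ}

lemma permMat_eq_permMatrix (θ : Equiv.Perm (Fin m)) : permMat θ = θ.permMatrix ℝ := by
  ext i j
  simp [permMat, Equiv.Perm.permMatrix, PEquiv.toMatrix_apply, eq_comm]

lemma Tmat_mem_colStochastic : Tmat m ∈ colStochastic ℝ (Fin m) := by
  refine mem_colStochastic_iff_sum.2 ⟨fun i j => ?_, fun j => ?_⟩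
  · rw [Tmat]
    split_ifs <;> positivity
  · simp only [Tmat]
    rw [← Finset.sum_filter, Finset.sum_const, Finset.filter_ge_eq_Iic, Fin.card_Iic, nsmul_eq_mul]
    push_cast
    exact mul_one_div_cancel (by positivity)

lemma WDSmat_mem_colStochastic (θ : Equiv.Perm (Fin m)) : WDSmat θ ∈ colStochastic ℝ (Fin m) := by
  rw [WDSmat, permMat_eq_permMatrix]
  exact mul_mem permMatrix_mem_colStochastic Tmat_mem_colStochastic

lemma WDSmat_mulVec (θ : Equiv.Perm (Fin m)) (y : Fin m → ℝ) :
    WDSmat θ *ᵥ y = (Tmat m *ᵥ y) ∘ θ := by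
  rw [WDSmat, permMat_eq_permMatrix, ← mulVec_mulVec, permMatrix_mulVec]

lemma WDSmat_apply (θ : Equiv.Perm (Fin m)) (i j : Fin m) : WDSmat θ i j = Tmat m (θ i) j := by
  have := congrFun (WDSmat_mulVec θ (Pi.single j 1)) i
  simpa only [mulVec_single_one, Function.comp_apply, col_apply] using this

lemma exists_inv_le_WDSmat [NeZero m] (θ : Equiv.Perm (Fin m)) :
    ∃ i, ∀ j, (m : ℝ)⁻¹ ≤ WDSmat θ i j := by
  refine ⟨θ.symm 0, fun j => ?_⟩
  rw [WDSmat_apply, Equiv.apply_symm_apply, Tmat, if_pos (Fin.zero_le j), one_div]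
  exact inv_anti₀ (by positivity) (by exact_mod_cast j.2)

lemma WDSprod_mem_colStochastic {k : ℕ} (θ : Fin k → Equiv.Perm (Fin m)) :
    WDSprod θ ∈ colStochastic ℝ (Fin m) :=
  list_prod_mem (List.forall_mem_ofFn_iff.2 fun i => WDSmat_mem_colStochastic (θ i))

lemma abs_WDSprod_sub_le [NeZero m] {k : ℕ} (θ : Fin k → Equiv.Perm (Fin m)) (i j j' : Fin m) :
    |WDSprod θ i j - WDSprod θ i j'| ≤ (1 - (m : ℝ)⁻¹) ^ k := by
  simpa only [WDSprod, List.length_ofFn] using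
    abs_list_prod_sub_le (List.forall_mem_ofFn_iff.2 fun l =>
      ⟨WDSmat_mem_colStochastic (θ l), exists_inv_le_WDSmat (θ l)⟩) i j j'

lemma exists_Tmat_mulVec_eq {z : Fin m → ℝ} (hz : Antitone z) (z_nonneg : ∀ i, 0 ≤ z i) :
    ∃ y : Fin m → ℝ, (∀ j, 0 ≤ y j) ∧ Tmat m *ᵥ y = z := by
  let Z : ℕ → ℝ := fun k => if h : k < m then z ⟨k, h⟩ else 0
  have Z_anti (k : ℕ) : Z (k + 1) ≤ Z k := by
    by_cases hk : k + 1 < m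
    · simp only [Z, dif_pos hk, dif_pos (Nat.lt_of_succ_lt hk)]
      exact hz (Fin.mk_le_mk.2 k.le_succ)
    · simp only [Z, dif_neg hk]
      split_ifs
      exacts [z_nonneg _, le_rfl]
  refine ⟨fun j => ((j : ℕ) + 1) * (Z j - Z (j + 1)), fun j =>
    mul_nonneg (by positivity) (sub_nonneg.2 (Z_anti j)), funext fun i => ?_⟩
  calc ∑ j : Fin m, Tmat m i j * (((j : ℕ) + 1) * (Z j - Z (j + 1)))
      = ∑ j : Fin m, if (i : ℕ) ≤ j then Z j - Z (j + 1) else 0 := by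
        refine Finset.sum_congr rfl fun j _ => ?_
        simp only [Tmat, ← Fin.le_def]
        split_ifs
        · rw [← mul_assoc, one_div_mul_cancel (by positivity), one_mul]
        · rw [zero_mul]
    _ = ∑ j ∈ Finset.Ico (i : ℕ) m, (Z j - Z (j + 1)) := by
        rw [Fin.sum_univ_eq_sum_range (fun j => if (i : ℕ) ≤ j then Z j - Z (j + 1) else 0),
          ← Finset.sum_filter]
        congr 1
        ext j
        simp only [Finset.mem_filter, Finset.mem_range, Finset.mem_Ico, and_comm]
    _ = z i := by
        rw [Finset.sum_Ico_eq_sub _ i.2.le, Finset.sum_range_sub', Finset.sum_range_sub']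
        simp [Z]

lemma exists_WDSmat_mulVec_eq {x : Fin m → ℝ} (hx : x ∈ stdSimplex ℝ (Fin m)) :
    ∃ θ : Equiv.Perm (Fin m), ∃ y ∈ stdSimplex ℝ (Fin m), WDSmat θ *ᵥ y = x := by
  let sorting : Equiv.Perm (Fin m) := Tuple.sort (-x)
  have antitone : Antitone (x ∘ sorting) := fun i j hij =>
    neg_le_neg_iff.1 (Tuple.monotone_sort (-x) hij)
  obtain ⟨y, y_nonneg, hy⟩ := exists_Tmat_mulVec_eq antitone fun i => hx.1 _
  have mulVec_eq : WDSmat sorting.symm *ᵥ y = x := by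
    rw [WDSmat_mulVec, hy, Function.comp_assoc, Equiv.self_comp_symm, Function.comp_id]
  refine ⟨sorting.symm, y, ⟨y_nonneg, ?_⟩, mulVec_eq⟩
  rw [← sum_mulVec_of_mem_colStochastic (WDSmat_mem_colStochastic sorting.symm), mulVec_eq, hx.2]

lemma exists_WDSprod_mulVec_eq (k : ℕ) {x : Fin m → ℝ} (hx : x ∈ stdSimplex ℝ (Fin m)) :
    ∃ θ : Fin k → Equiv.Perm (Fin m), ∃ y ∈ stdSimplex ℝ (Fin m), WDSprod θ *ᵥ y = x := by
  induction k generalizing x with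
  | zero => exact ⟨Fin.elim0, x, hx, by simp [WDSprod]⟩
  | succ k ih =>
    obtain ⟨θ₀, x₁, hx₁, rfl⟩ := exists_WDSmat_mulVec_eq hx
    obtain ⟨θ, y, hy, rfl⟩ := ih hx₁
    exact ⟨Fin.cons θ₀ θ, y, hy, by simp [WDSprod, List.ofFn_succ, mulVec_mulVec]⟩

lemma eval_linSubst (B : Matrix (Fin m) (Fin m) ℝ) (f : MvPolynomial (Fin m) ℝ) (y : Fin m → ℝ) :
    MvPolynomial.eval y (linSubst B f) = MvPolynomial.eval (B *ᵥ y) f := by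
  simp only [linSubst, MvPolynomial.eval, MvPolynomial.eval₂Hom_bind₁, map_sum, map_mul,
    MvPolynomial.eval₂Hom_C, MvPolynomial.eval₂Hom_X', RingHom.id_apply]
  rfl

lemma linSubst_isHomogeneous {d : ℕ} (B : Matrix (Fin m) (Fin m) ℝ) {f : MvPolynomial (Fin m) ℝ}
    (hf : f.IsHomogeneous d) : (linSubst B f).IsHomogeneous d := by
  simpa only [one_mul, linSubst, MvPolynomial.bind₁] using hf.aeval _ fun i =>
    MvPolynomial.IsHomogeneous.sum Finset.univ _ 1 fun j _ =>
      (MvPolynomial.isHomogeneous_X ℝ j).C_mul (B i j)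

end WDS

/-! ### Coefficients after substitution -/

section Coefficients

open MvPolynomial

variable {σ ι R : Type*} [CommRing R] [LinearOrder R] [IsStrictOrderedRing R]

/-- Coefficientwise domination of polynomials, `|pₐ| ≤ Pₐ` for every exponent `a`. -/
def IsMajorant (P p : MvPolynomial σ R) : Prop :=
  ∀ κ, |p.coeff κ| ≤ P.coeff κ

namespace IsMajorant

lemma coeff_nonneg {P p : MvPolynomial σ R} (h : IsMajorant P p) (κ : σ →₀ ℕ) : 0 ≤ P.coeff κ :=
  (abs_nonneg _).trans (h κ)

lemma add {P Q p q : MvPolynomial σ R} (hp : IsMajorant P p) (hq : IsMajorant Q q) :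
    IsMajorant (P + Q) (p + q) := fun κ => by
  simpa only [coeff_add] using (abs_add_le _ _).trans (add_le_add (hp κ) (hq κ))

lemma mul {P Q p q : MvPolynomial σ R} (hp : IsMajorant P p) (hq : IsMajorant Q q) :
    IsMajorant (P * Q) (p * q) := fun κ => by
  classical
  simp only [coeff_mul]
  refine (Finset.abs_sum_le_sum_abs _ _).trans (Finset.sum_le_sum fun x _ => ?_)
  rw [abs_mul]
  exact mul_le_mul (hp _) (hq _) (abs_nonneg _) (hp.coeff_nonneg _)

lemma C_mul {P p : MvPolynomial σ R} (h : IsMajorant P p) {a b : R} (hab : |a| ≤ b) :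
    IsMajorant (C b * P) (C a * p) := fun κ => by
  rw [coeff_C_mul, coeff_C_mul, abs_mul]
  exact mul_le_mul hab (h κ) (abs_nonneg _) ((abs_nonneg _).trans hab)

lemma one : IsMajorant (1 : MvPolynomial σ R) 1 := fun κ => by
  classical
  rw [coeff_one]
  split_ifs <;> simp

lemma zero : IsMajorant (0 : MvPolynomial σ R) 0 := fun κ => by
  simp

lemma sum {s : Finset ι} {P p : ι → MvPolynomial σ R} (h : ∀ i ∈ s, IsMajorant (P i) (p i)) :
    IsMajorant (∑ i ∈ s, P i) (∑ i ∈ s, p i) := fun κ => by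
  simpa only [coeff_sum] using
    (Finset.abs_sum_le_sum_abs _ _).trans (Finset.sum_le_sum fun i hi => h i hi κ)

lemma sum_C_mul_X [Fintype σ] {a b : σ → R} (h : ∀ i, |a i| ≤ b i) :
    IsMajorant (∑ i, C (b i) * X i) (∑ i, C (a i) * X i) := by
  refine sum fun i _ => C_mul (fun κ => ?_) (h i)
  classical
  rw [coeff_X]
  split_ifs <;> simp

end IsMajorant

/-- `p` and `q` have the common majorant `P`, and their difference has the majorant `ε P`. -/
structure CloseWithin (P : MvPolynomial σ R) (ε : R) (p q : MvPolynomial σ R) : Prop where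
  left : IsMajorant P p
  right : IsMajorant P q
  sub : IsMajorant (C ε * P) (p - q)

namespace CloseWithin

variable {P Q p q p' q' : MvPolynomial σ R} {ε η : R}

lemma one : CloseWithin (1 : MvPolynomial σ R) 0 1 1 :=
  ⟨.one, .one, by simpa using IsMajorant.zero⟩

lemma mul (hp : CloseWithin P ε p p') (hq : CloseWithin Q η q q') :
    CloseWithin (P * Q) (ε + η) (p * q) (p' * q') := by
  refine ⟨hp.left.mul hq.left, hp.right.mul hq.right, ?_⟩
  have majorant_eq : C (ε + η) * (P * Q) = P * (C η * Q) + C ε * P * Q := by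
    rw [C_add]
    ring
  have difference_eq : p * q - p' * q' = p * (q - q') + (p - p') * q' := by ring
  rw [majorant_eq, difference_eq]
  exact (hp.left.mul hq.sub).add (hp.sub.mul hq.right)

lemma pow (h : CloseWithin P ε p p') (n : ℕ) : CloseWithin (P ^ n) (n * ε) (p ^ n) (p' ^ n) := by
  induction n with
  | zero => simpa using one
  | succ n ih => simpa only [pow_succ, Nat.cast_succ, add_one_mul] using ih.mul h

lemma prod_pow {p p' : ι → MvPolynomial σ R} (h : ∀ i, CloseWithin P ε (p i) (p' i)) (α : ι →₀ ℕ) :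
    CloseWithin (P ^ α.degree) (α.degree * ε) (α.prod fun i n => p i ^ n)
      (α.prod fun i n => p' i ^ n) := by
  classical
  induction α using Finsupp.induction with
  | zero => simpa using one
  | single_add i n α _ _ ih =>
    have prod_add (r : ι → MvPolynomial σ R) : ((Finsupp.single i n + α).prod fun i n => r i ^ n) =
        r i ^ n * α.prod fun i n => r i ^ n := by
      rw [Finsupp.prod_add_index' (by simp) (fun i => pow_add (r i)),
        Finsupp.prod_single_index (h := fun i n => r i ^ n) (pow_zero _)]
    rw [prod_add, prod_add, map_add, Finsupp.degree_single, Nat.cast_add, add_mul, pow_add]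
    exact ((h i).pow n).mul ih

lemma sum_C_mul_X [Fintype σ] {a : σ → R} {b δ : R} (ha : ∀ j, |a j| ≤ 1) (hb : |b| ≤ 1)
    (hab : ∀ j, |a j - b| ≤ δ) :
    CloseWithin (∑ j, X j) δ (∑ j, C (a j) * X j) (C b * ∑ j, X j) := by
  have majorant_eq (c : R) : C c * ∑ j : σ, X j = ∑ j, C c * X j := Finset.mul_sum _ _ _
  refine ⟨?_, ?_, ?_⟩
  · simpa using IsMajorant.sum_C_mul_X (b := fun _ => 1) ha
  · simpa [majorant_eq] using IsMajorant.sum_C_mul_X (b := fun _ => 1) fun _ : σ => hb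
  · simpa [majorant_eq, sub_mul, Finset.sum_sub_distrib] using
      IsMajorant.sum_C_mul_X (b := fun _ => δ) hab

end CloseWithin

end Coefficients

section Substitution

open MvPolynomial

variable {σ ι : Type*}

lemma isMajorant_aeval_sub {f : MvPolynomial ι ℤ} {d : ℕ} (hf : f.IsHomogeneous d)
    {P : MvPolynomial σ ℝ} {ε : ℝ} {p p' : ι → MvPolynomial σ ℝ}
    (h : ∀ i, CloseWithin P ε (p i) (p' i)) :
    IsMajorant (C (mvIntL1 f * (d * ε)) * P ^ d) (aeval p f - aeval p' f) := by
  have aeval_eq (q : ι → MvPolynomial σ ℝ) :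
      aeval q f = ∑ α ∈ f.support, C ((f.coeff α : ℤ) : ℝ) * α.prod fun i n => q i ^ n := by
    simp only [aeval_def, eval₂_eq, Finsupp.prod, eq_intCast, map_intCast]
  rw [aeval_eq, aeval_eq, ← Finset.sum_sub_distrib, mvIntL1_eq_sum, Finset.sum_mul, map_sum,
    Finset.sum_mul]
  refine IsMajorant.sum fun α hα => ?_
  have degree_eq : α.degree = d := not_imp_comm.1 hf.coeff_eq_zero (mem_support_iff.1 hα)
  have sub_majorant := (CloseWithin.prod_pow h α).sub
  rw [degree_eq] at sub_majorant
  rw [← mul_sub, C_mul, mul_assoc]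
  exact sub_majorant.C_mul le_rfl

lemma aeval_C_mul {f : MvPolynomial ι ℤ} {d : ℕ} (hf : f.IsHomogeneous d) (b : ι → ℝ)
    (p : MvPolynomial σ ℝ) : aeval (fun i => C (b i) * p) f = C (aeval b f) * p ^ d := by
  simp only [aeval_def, eval₂_eq, map_sum, map_mul, map_prod, map_pow, Finset.sum_mul, eq_intCast,
    map_intCast]
  refine Finset.sum_congr rfl fun α hα => ?_
  have degree_eq : α.degree = d := not_imp_comm.1 hf.coeff_eq_zero (mem_support_iff.1 hα)
  rw [← degree_eq, Finsupp.degree_apply, ← Finset.prod_pow_eq_pow_sum, mul_assoc,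
    ← Finset.prod_mul_distrib]
  simp only [mul_pow]

/-- Substituting the linear forms `∑ Bᵢⱼ Xⱼ` into `f` yields nearly `f(b) (∑ Xⱼ)ᵈ`. -/
lemma coeff_aeval_linearForms_pos [Fintype σ] {f : MvPolynomial ι ℤ} {d : ℕ}
    (hf : f.IsHomogeneous d) {B : ι → σ → ℝ} {b : ι → ℝ} {δ : ℝ} (hB : ∀ i j, |B i j| ≤ 1)
    (hb : ∀ i, |b i| ≤ 1) (hBb : ∀ i j, |B i j - b i| ≤ δ)
    (hlt : mvIntL1 f * (d * δ) < aeval b f) {κ : σ →₀ ℕ} (hκ : κ.degree = d) :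
    0 < coeff κ (aeval (fun i => ∑ j, C (B i j) * X j) f) := by
  have abs_le := isMajorant_aeval_sub hf (fun i => CloseWithin.sum_C_mul_X (hB i) (hb i) (hBb i)) κ
  have multinomial_pos : 0 < coeff κ ((∑ j, X j : MvPolynomial σ ℝ) ^ d) := by
    have sum_eq : (κ.sum fun _ n => n) = d := hκ
    rw [coeff_sum_X_pow_of_fintype, if_pos sum_eq]
    exact_mod_cast Nat.multinomial_pos _ _
  rw [aeval_C_mul hf, coeff_sub, coeff_C_mul, coeff_C_mul] at abs_le
  linarith [(abs_sub_le_iff.1 abs_le).2, mul_lt_mul_of_pos_right hlt multinomial_pos]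

lemma eval_pos_of_coeff_pos [Fintype σ] {p : MvPolynomial σ ℝ} {d : ℕ} (hp : p.IsHomogeneous d)
    (hc : ∀ α : σ →₀ ℕ, α.degree = d → 0 < p.coeff α) {y : σ → ℝ} (hy : y ∈ stdSimplex ℝ σ) :
    0 < eval y p := by
  classical
  obtain ⟨j, hj⟩ : ∃ j, 0 < y j := by
    by_contra! h
    exact absurd (hy.2.symm.trans_le (Finset.sum_nonpos fun i _ => h i)) zero_lt_one.not_ge
  have vertex_pos : 0 < p.coeff (Finsupp.single j d) := hc _ (Finsupp.degree_single j d)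
  rw [eval_eq]
  refine Finset.sum_pos' (fun α hα => ?_)
    ⟨Finsupp.single j d, mem_support_iff.2 vertex_pos.ne', ?_⟩
  · have degree_eq : α.degree = d := not_imp_comm.1 hp.coeff_eq_zero (mem_support_iff.1 hα)
    exact mul_nonneg (hc α degree_eq).le (Finset.prod_nonneg fun i _ => pow_nonneg (hy.1 i) _)
  · refine mul_pos vertex_pos (Finset.prod_pos fun i hi => ?_)
    rw [Finset.mem_singleton.1 (Finsupp.support_single_subset hi)]
    exact pow_pos hj _

end Substitution

/-! ### The iteration bound -/

section Bound

open MvPolynomial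

variable {m d : ℕ}

/-- The number whose logarithm is the numerator in `C_p(M, m, d)`. -/
noncomputable def boundArg (M m d : ℕ) : ℝ :=
  (2 : ℝ) ^ (d ^ m) * (M : ℝ) ^ (d ^ m + 1) * (m : ℝ) ^ (d ^ (m + 1) + d) *
    (d : ℝ) ^ ((m + 1) * d + m * d ^ m) * ((d : ℝ) + 1) ^ ((m - 1) * (m + 2))

lemma one_le_boundArg {M : ℕ} (hm : 1 ≤ m) (hd : 1 ≤ d) (hM : 1 ≤ M) : 1 ≤ boundArg M m d := by
  unfold boundArg
  norm_cast
  exact Nat.succ_le_of_lt (by positivity)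

lemma minimum_base_le {M : ℕ} (hm : 2 ≤ m) (hd : 1 ≤ d) (hM : 2 ≤ M) :
    m * (d ^ m * (M * d) + 1) + 1 ≤ 2 * M * m ^ d * d ^ m := by
  obtain ⟨e, rfl⟩ : ∃ e, d = e + 1 := ⟨d - 1, by omega⟩
  have succ_le : e + 1 ≤ m ^ e :=
    (Nat.succ_le_of_lt e.lt_two_pow_self).trans (Nat.pow_le_pow_left hm e)
  set P := (e + 1) ^ m
  have one_le_P : 1 ≤ P := Nat.one_le_pow _ _ e.succ_pos
  have two_le : 2 ≤ M * P := hM.trans (Nat.le_mul_of_pos_right M one_le_P)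
  calc m * (P * (M * (e + 1)) + 1) + 1 ≤ M * P * (m * (e + 1)) + 2 * m := by nlinarith
    _ ≤ M * P * (m * m ^ e) + M * P * (m * m ^ e) := by
        gcongr
        exact Nat.le_mul_of_pos_right m (by positivity)
    _ = 2 * M * m ^ (e + 1) * P := by ring

lemma precision_le_boundArg {M : ℕ} (hm : 2 ≤ m) (hd : 1 ≤ d) (hM : 2 ≤ M) :
    ((d + 1) ^ m * M * d * ((m * (d ^ m * (M * d) + 1) + 1) ^ d ^ m * d) : ℝ) ≤
      boundArg M m d := by
  have d_le : d ≤ m ^ d := (d.lt_pow_self hm).le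
  have m_le : m ≤ (m - 1) * (m + 2) := by
    obtain ⟨e, rfl⟩ : ∃ e, m = e + 2 := ⟨m - 2, by omega⟩
    rw [show e + 2 - 1 = e + 1 by omega]
    nlinarith
  unfold boundArg
  norm_cast
  calc (d + 1) ^ m * M * d * ((m * (d ^ m * (M * d) + 1) + 1) ^ d ^ m * d)
      ≤ (d + 1) ^ ((m - 1) * (m + 2)) * M * m ^ d *
          ((2 * M * m ^ d * d ^ m) ^ d ^ m * d ^ ((m + 1) * d)) := by
        gcongr
        · exact d.succ_pos
        · exact minimum_base_le hm hd hM
        · exact Nat.le_self_pow (by positivity) d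
    _ = _ := by
        rw [mul_pow, mul_pow, mul_pow, ← pow_mul, ← pow_mul, pow_succ M, pow_add m,
          pow_add d ((m + 1) * d), pow_succ' d m]
        ring

lemma exists_le_floor_add_one_mul_pow_lt_one {Z q : ℝ} (hZ : 1 ≤ Z) (hq₀ : 0 < q) (hq₁ : q < 1) :
    ∃ k : ℕ, (k : ℤ) ≤ ⌊Real.log Z / -Real.log q⌋ + 1 ∧ Z * q ^ k < 1 := by
  have log_neg : 0 < -Real.log q := neg_pos.2 (Real.log_neg hq₀ hq₁)
  have quotient_nonneg : 0 ≤ Real.log Z / -Real.log q := div_nonneg (Real.log_nonneg hZ) log_neg.le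
  have Z_pos : 0 < Z := one_pos.trans_le hZ
  refine ⟨⌊Real.log Z / -Real.log q⌋₊ + 1, ?_, ?_⟩
  · rw [Nat.cast_succ, Int.natCast_floor_eq_floor quotient_nonneg]
  · have lt_floor := Nat.lt_floor_add_one (Real.log Z / -Real.log q)
    rw [div_lt_iff₀ log_neg] at lt_floor
    rw [← Real.log_neg_iff (by positivity), Real.log_mul Z_pos.ne' (by positivity), Real.log_pow]
    push_cast
    linarith

lemma linSubst_map_intCast (B : Matrix (Fin m) (Fin m) ℝ) (f : MvPolynomial (Fin m) ℤ) :
    linSubst B (f.map (Int.castRingHom ℝ)) = aeval (fun i => ∑ j, C (B i j) * X j) f := by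
  rw [linSubst, bind₁, ← algebraMap_int_eq, aeval_map_algebraMap]

lemma coeff_linSubst_WDSprod_pos {M : ℕ} (hm : 2 ≤ m) (hd : 1 ≤ d) (hM : 2 ≤ M)
    {f : MvPolynomial (Fin m) ℤ} (hf : f.IsHomogeneous d) (hbound : ∀ α, |f.coeff α| ≤ M)
    (hpos : ∀ x ∈ stdSimplex ℝ (Fin m), 0 < aeval x f) {k : ℕ}
    (hk : boundArg M m d * (1 - (m : ℝ)⁻¹) ^ k < 1) (θ : Fin k → Equiv.Perm (Fin m))
    {α : Fin m →₀ ℕ} (hα : α.degree = d) :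
    0 < coeff α (linSubst (WDSprod θ) (f.map (Int.castRingHom ℝ))) := by
  have : NeZero m := ⟨by omega⟩
  have stochastic := WDSprod_mem_colStochastic θ
  have entry_abs_le (i j : Fin m) : |WDSprod θ i j| ≤ 1 := by
    rw [abs_of_nonneg (nonneg_of_mem_colStochastic stochastic)]
    exact le_one_of_mem_colStochastic stochastic
  have bound_real (α : Fin m →₀ ℕ) : |((f.coeff α : ℤ) : ℝ)| ≤ (M : ℝ≥0) := by
    rw [NNReal.coe_natCast]
    exact_mod_cast hbound α
  let b : Fin m → ℝ := fun i => WDSprod θ i 0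
  have b_mem : b ∈ stdSimplex ℝ (Fin m) :=
    ⟨fun _ => nonneg_of_mem_colStochastic stochastic, sum_col_of_mem_colStochastic stochastic 0⟩
  rw [linSubst_map_intCast]
  refine coeff_aeval_linearForms_pos hf entry_abs_le (fun i => entry_abs_le i 0)
    (fun i j => abs_WDSprod_sub_le θ i j 0) ?_ hα
  have norm_le : mvIntL1 f ≤ ((d + 1) ^ m * M : ℝ) := by
    simpa using mvIntL1_le (Nat.lt_succ_of_le hf.totalDegree_le) fun α _ => bound_real α
  have min_bound := one_le_pow_mul_aeval hd hf bound_real hpos b_mem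
  rw [Fintype.card_fin, NNReal.coe_natCast, ← mul_assoc] at min_bound
  set Q : ℝ := (m * (d ^ m * (M * d) + 1) + 1) ^ d ^ m * d
  set δ : ℝ := (1 - (m : ℝ)⁻¹) ^ k
  have δ_nonneg : 0 ≤ δ := pow_nonneg (sub_nonneg.2 (Nat.cast_inv_le_one m)) k
  have Q_pos : 0 < Q := by positivity
  refine lt_of_mul_lt_mul_left ?_ Q_pos.le
  calc Q * (mvIntL1 f * (d * δ)) ≤ Q * ((d + 1) ^ m * M * (d * δ)) := by gcongr
    _ = (d + 1) ^ m * M * d * Q * δ := by ring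
    _ ≤ boundArg M m d * δ := by
        gcongr
        exact precision_le_boundArg hm hd hM
    _ < 1 := hk
    _ ≤ Q * aeval b f := min_bound

end Bound

/-- **Completeness of the WDS method with an explicit bound.** Let `f` be a nonzero
integral homogeneous polynomial of degree `d ≥ 1` in `m ≥ 2` variables whose coefficients
have absolute value at most `M` (an integer `≥ 2`). Then `f` is positive on the standard
simplex iff for some `k ≤ C_p(M,m,d)` every form in the `k`-th WDS set of `f` has complete
monomials with all positive coefficients, where
`C_p(M,m,d) = ⌊ln(2^(d^m) M^(d^m+1) m^(d^(m+1)+d) d^((m+1)d+m d^m) (d+1)^((m-1)(m+2))) /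
(ln m - ln(m-1))⌋ + 2`. -/
theorem wds_complete_with_bound (m d : ℕ) (M : ℤ) (hm : 2 ≤ m) (hd : 1 ≤ d) (hM : 2 ≤ M)
    (f : MvPolynomial (Fin m) ℤ) (hf0 : f ≠ 0) (hf : f.IsHomogeneous d)
    (hbound : ∀ α : Fin m →₀ ℕ, |MvPolynomial.coeff α f| ≤ M) :
    (∀ x ∈ stdSimplex ℝ (Fin m),
        0 < MvPolynomial.eval x (MvPolynomial.map (Int.castRingHom ℝ) f)) ↔
      ∃ k : ℕ,
        (k : ℤ) ≤
          ⌊Real.log ((2 : ℝ) ^ (d ^ m) * (M : ℝ) ^ (d ^ m + 1) *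
                (m : ℝ) ^ (d ^ (m + 1) + d) * (d : ℝ) ^ ((m + 1) * d + m * d ^ m) *
                ((d : ℝ) + 1) ^ ((m - 1) * (m + 2))) /
              (Real.log m - Real.log (m - 1))⌋ + 2 ∧
        ∀ θ : Fin k → Equiv.Perm (Fin m), ∀ α : Fin m →₀ ℕ, (∑ i, α i) = d →
          0 < MvPolynomial.coeff α
                (linSubst (WDSprod θ) (MvPolynomial.map (Int.castRingHom ℝ) f)) := by
  simp only [eval_map_intCast]
  constructor
  · intro hpos
    lift M to ℕ using by omega
    have m_gt : (1 : ℝ) < m := by exact_mod_cast hm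
    have ratio_eq : 1 - (m : ℝ)⁻¹ = (m - 1) / m := by field_simp
    have log_ratio : -Real.log (1 - (m : ℝ)⁻¹) = Real.log m - Real.log (m - 1) := by
      rw [ratio_eq, Real.log_div (by linarith) (by linarith), neg_sub]
    obtain ⟨k, k_le, hk⟩ := exists_le_floor_add_one_mul_pow_lt_one
      (one_le_boundArg (by omega) hd (by omega) : 1 ≤ boundArg M m d)
      (sub_pos.2 (inv_lt_one_of_one_lt₀ m_gt)) (sub_lt_self 1 (by positivity))
    rw [log_ratio] at k_le
    refine ⟨k, k_le.trans (by simp [boundArg]), fun θ α hα => ?_⟩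
    exact coeff_linSubst_WDSprod_pos hm hd (by omega) hf hbound hpos hk θ
      (α.degree_eq_sum.trans hα)
  · rintro ⟨k, -, hk⟩ x hx
    obtain ⟨θ, y, hy, rfl⟩ := exists_WDSprod_mulVec_eq k hx
    rw [← eval_map_intCast, ← eval_linSubst]
    exact eval_pos_of_coeff_pos (linSubst_isHomogeneous _ (hf.map _))
      (fun α hα => hk θ α (α.degree_eq_sum.symm.trans hα)) hy
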